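/- arXiv:1701.04050 — 4 statements merged into one kernel-verified Lean document; each statement's English description precedes it below -/
import Mathlib

section
/- Let 0 < α < 1 and let k : ℝ → ℝ be a smooth compactly supported function with k(0) = 0. Define g : ℝ → ℝ by g(z) = sgn(z)·k(|z|^α), and let h : ℝ → ℝ be the (principal-value) Hilbert transform of g. Then the limit lim_{z → 0} (h(z) − h(0))/|z|^α exists and equals cot(απ/2)·k'(0). -/
open MeasureTheory Filter

/-- `h` is the pointwise (principal-value) Hilbert transform of `f`. -/
def IsPVHilbert (f h : ℝ → ℝ) : Prop :=
  ∀ x : ℝ, Tendsto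
    (fun ε : ℝ => (Real.pi)⁻¹ * ∫ y in {y : ℝ | ε < |x - y|}, f y / (x - y))
    (nhdsWithin 0 (Set.Ioi 0)) (nhds (h x))


lemma hasSum_cot_aux (a : ℝ) (ha : 0 < a) (ha2 : a < 1 / 2) :
    HasSum (fun n : ℕ => 1 / ((n : ℝ) + a) - 1 / ((n : ℝ) + 1 - a))
      (Real.pi * Real.cot (Real.pi * a)) := by
  have hz : (a : ℂ) ∈ Complex.integerComplement := by
    rw [Complex.mem_integerComplement_iff]
    rintro ⟨n, hn⟩
    have hn' : (n : ℝ) = a := by exact_mod_cast hn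
    have h1 : (0 : ℝ) < n := by rw [hn']; exact ha
    have h2 : (n : ℝ) < 1 := by rw [hn']; linarith
    have h1' : 0 < n := by exact_mod_cast h1
    have h2' : n < 1 := by exact_mod_cast h2
    omega
  have h := tendsto_logDeriv_euler_cot_sub hz
  have h' : Tendsto (fun n : ℕ => ∑ j ∈ Finset.range n, (1 / (a - ((j:ℝ) + 1)) + 1 / (a + ((j : ℝ) + 1))))
      atTop (nhds (Real.pi * Real.cot (Real.pi * a) - 1 / a)) := by
    have := (Complex.continuous_re.tendsto _).comp h
    have e : ((Real.pi : ℂ) * Complex.cot (Real.pi * a) - 1 / a).re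
        = Real.pi * Real.cot (Real.pi * a) - 1 / a := by
      rw [← Complex.ofReal_re (Real.pi * Real.cot (Real.pi * a) - 1 / a)]
      push_cast; rfl
    rw [e] at this
    refine this.congr fun n => ?_
    simp only [Function.comp, cotTerm]
    rw [← Complex.ofReal_re (∑ j ∈ Finset.range n, (1 / (a - ((j:ℝ) + 1)) + 1 / (a + ((j : ℝ) + 1))))]
    push_cast; rfl
  rw [hasSum_iff_tendsto_nat_of_nonneg]
  · have h0 : Tendsto (fun n : ℕ => 1 / ((n : ℝ) + a)) atTop (nhds 0) := by
      simp only [one_div]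
      exact tendsto_inv_atTop_zero.comp (tendsto_atTop_add_const_right _ _ tendsto_natCast_atTop_atTop)
    have := (h'.add_const (1 / a)).sub h0
    simp only [sub_add_cancel, sub_zero] at this
    refine this.congr fun n => ?_
    induction n with
    | zero => simp
    | succ n ih =>
      rw [Finset.sum_range_succ, Finset.sum_range_succ, ← ih]
      have : (n : ℝ) + 1 - a = -(a - ((n : ℝ) + 1)) := by ring
      rw [this, div_neg]
      push_cast
      rw [show a + ((n : ℝ) + 1) = n + 1 + a by ring]
      ring
  · intro n
    have : (0 : ℝ) ≤ n := n.cast_nonneg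
    rw [sub_nonneg]
    apply one_div_le_one_div_of_le <;> linarith

lemma integral_unit_aux (α : ℝ) (hα : 0 < α) (hα1 : α < 1) :
    ∫ t in Set.Ioo (0:ℝ) 1, 2 * (t ^ (α - 1) - t ^ (1 - α)) / (1 - t ^ 2)
      = Real.pi * Real.cot (α * Real.pi / 2) := by
  have hs := hasSum_cot_aux (α / 2) (by linarith) (by linarith)
  rw [show Real.pi * (α / 2) = α * Real.pi / 2 by ring] at hs
  let F : ℕ → ℝ → ℝ := fun n t => 2 * (t ^ (2 * (n:ℝ) + α - 1) - t ^ (2 * (n:ℝ) + 1 - α))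
  have hii : ∀ r : ℝ, -1 < r → IntegrableOn (fun t : ℝ => t ^ r) (Set.Ioo 0 1) := fun r hr =>
    (intervalIntegral.integrableOn_Ioo_rpow_iff one_pos).2 hr
  have hiv : ∀ r : ℝ, -1 < r → ∫ t in Set.Ioo (0:ℝ) 1, t ^ r = 1 / (r + 1) := fun r hr => by
    rw [← integral_Ioc_eq_integral_Ioo, ← intervalIntegral.integral_of_le zero_le_one,
      integral_rpow (Or.inl hr), Real.one_rpow, Real.zero_rpow (by linarith), sub_zero]
  have hr1 : ∀ n : ℕ, -1 < 2 * (n:ℝ) + α - 1 := fun n => by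
    have : (0 : ℝ) ≤ n := n.cast_nonneg
    linarith
  have hr2 : ∀ n : ℕ, -1 < 2 * (n:ℝ) + 1 - α := fun n => by
    have : (0 : ℝ) ≤ n := n.cast_nonneg
    linarith
  have hFi : ∀ n, IntegrableOn (F n) (Set.Ioo 0 1) := fun n =>
    ((hii _ (hr1 n)).sub (hii _ (hr2 n))).const_mul 2
  have hFv : ∀ n, ∫ t in Set.Ioo (0:ℝ) 1, F n t = 1 / ((n : ℝ) + α / 2) - 1 / ((n : ℝ) + 1 - α / 2) := by
    intro n
    simp only [F]
    rw [integral_const_mul, integral_sub (hii _ (hr1 n)) (hii _ (hr2 n)), hiv _ (hr1 n), hiv _ (hr2 n)]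
    have : (0 : ℝ) ≤ n := n.cast_nonneg
    have h1 : (n : ℝ) + α / 2 ≠ 0 := by positivity
    have h2 : (n : ℝ) + 1 - α / 2 ≠ 0 := by linarith
    rw [show 2 * (n:ℝ) + α - 1 + 1 = 2 * (n + α / 2) by ring,
      show 2 * (n:ℝ) + 1 - α + 1 = 2 * (n + 1 - α / 2) by ring]
    field_simp
  have hF0 : ∀ n, ∀ t ∈ Set.Ioo (0:ℝ) 1, 0 ≤ F n t := by
    intro n t ht
    have := Real.rpow_le_rpow_of_exponent_ge ht.1 ht.2.le
      (show 2 * (n:ℝ) + α - 1 ≤ 2 * (n:ℝ) + 1 - α by linarith)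
    simp only [F]; linarith
  have hn : ∀ n, ∫ t in Set.Ioo (0:ℝ) 1, ‖F n t‖ = 1 / ((n : ℝ) + α / 2) - 1 / ((n : ℝ) + 1 - α / 2) := by
    intro n
    rw [← hFv n]
    refine setIntegral_congr_fun measurableSet_Ioo fun t ht => ?_
    exact Real.norm_of_nonneg (hF0 n t ht)
  have key := hasSum_integral_of_summable_integral_norm hFi (by simp_rw [hn]; exact hs.summable)
  simp_rw [hFv] at key
  rw [← key.unique hs]
  refine setIntegral_congr_fun measurableSet_Ioo fun t ht => ?_
  have hg := hasSum_geometric_of_lt_one (sq_nonneg t) (show t ^ 2 < 1 by nlinarith [ht.1, ht.2])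
  have := (hg.mul_left (2 * (t ^ (α - 1) - t ^ (1 - α)))).tsum_eq
  simp only [div_eq_mul_inv]
  rw [← this]
  refine tsum_congr fun n => ?_
  simp only [F]
  rw [show 2 * (n:ℝ) + α - 1 = (α - 1) + ((2 * n : ℕ):ℝ) by push_cast; ring,
    show 2 * (n:ℝ) + 1 - α = (1 - α) + ((2 * n : ℕ):ℝ) by push_cast; ring,
    Real.rpow_add_natCast ht.1.ne', Real.rpow_add_natCast ht.1.ne', pow_mul]
  ring

noncomputable def scG (k : ℝ → ℝ) (α l t : ℝ) : ℝ := Real.sign t * k (l * |t| ^ α) / l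

noncomputable def scF (k : ℝ → ℝ) (α l t : ℝ) : ℝ :=
  (scG k α l t - (Set.Ioo (0:ℝ) 2).indicator (fun _ => scG k α l 1) t) / (1 - t) + scG k α l t / t

noncomputable def domF (α C t : ℝ) : ℝ :=
  (Set.Ioo (0:ℝ) 2).indicator (fun _ => C) t + 3 * C * (|t| ^ (α - 1) / (1 + |t|))

lemma abs_sign_le (t : ℝ) : |Real.sign t| ≤ 1 := by
  rcases Real.sign_apply_eq t with h | h | h <;> simp [h]

lemma measurable_sign' : Measurable Real.sign := by
  unfold Real.sign
  exact Measurable.ite measurableSet_Iio measurable_const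
    (Measurable.ite measurableSet_Ioi measurable_const measurable_const)

lemma measurable_scG {k : ℝ → ℝ} (hk : Measurable k) (α l : ℝ) : Measurable (scG k α l) := by
  unfold scG
  have := measurable_sign'
  fun_prop

lemma measurable_scF {k : ℝ → ℝ} (hk : Measurable k) (α l : ℝ) : Measurable (scF k α l) := by
  unfold scF
  have h1 := measurable_scG hk α l
  have h2 : Measurable ((Set.Ioo (0:ℝ) 2).indicator (fun _ => scG k α l 1)) :=
    measurable_const.indicator measurableSet_Ioo
  exact ((h1.sub h2).div (by fun_prop)).add (h1.div measurable_id)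

lemma scG_bound {k : ℝ → ℝ} {C α l : ℝ} (hk : ∀ a b, |k a - k b| ≤ C * |a - b|)
    (hk0 : k 0 = 0) (hl : 0 < l) (t : ℝ) : |scG k α l t| ≤ C * |t| ^ α := by
  unfold scG
  rw [abs_div, abs_mul, abs_of_pos hl, div_le_iff₀ hl]
  have h1 := hk (l * |t| ^ α) 0
  have h0 : 0 ≤ |t| ^ α := by positivity
  rw [hk0, sub_zero, sub_zero, abs_of_nonneg (by positivity : 0 ≤ l * |t| ^ α)] at h1
  calc _ ≤ 1 * (C * (l * |t| ^ α)) := by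
        gcongr
        exact abs_sign_le t
    _ = _ := by ring

lemma rpow_sub_one_abs_le {α t : ℝ} (hα : 0 < α) (hα1 : α < 1) (ht : 0 < t) :
    |t ^ α - 1| ≤ |1 - t| := by
  rcases le_total t 1 with h | h
  · have h1 : t ^ α ≤ 1 := Real.rpow_le_one ht.le h hα.le
    have h2 := Real.rpow_le_rpow_of_exponent_ge ht h hα1.le
    rw [Real.rpow_one] at h2
    rw [abs_of_nonpos (by linarith), abs_of_nonneg (by linarith)]; linarith
  · have h1 : 1 ≤ t ^ α := Real.one_le_rpow h hα.le
    have h2 := Real.rpow_le_rpow_of_exponent_le h hα1.le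
    rw [Real.rpow_one] at h2
    rw [abs_of_nonneg (by linarith), abs_of_nonpos (by linarith)]; linarith

lemma scG_lip {k : ℝ → ℝ} {C α l : ℝ} (hα : 0 < α) (hα1 : α < 1)
    (hC : 0 ≤ C) (hk : ∀ a b, |k a - k b| ≤ C * |a - b|)
    (hl : 0 < l) {t : ℝ} (ht : 0 < t) : |scG k α l t - scG k α l 1| ≤ C * |1 - t| := by
  unfold scG
  rw [Real.sign_of_pos ht, Real.sign_one, one_mul, one_mul, ← sub_div, abs_div, abs_of_pos hl,
    div_le_iff₀ hl]
  refine (hk _ _).trans ?_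
  rw [abs_one, Real.one_rpow, ← mul_sub, abs_mul, abs_of_pos hl, abs_of_pos ht]
  have := rpow_sub_one_abs_le hα hα1 ht
  calc C * (l * |t ^ α - 1|) ≤ C * (l * |1 - t|) := by gcongr
    _ = _ := by ring

lemma quot_lip {C A t : ℝ} (hC : 0 ≤ C) (h : |A| ≤ C * |1 - t|) : |A / (1 - t)| ≤ C := by
  rw [abs_div]
  exact div_le_of_le_mul₀ (abs_nonneg _) hC h

lemma scF_bound {k : ℝ → ℝ} {C α l : ℝ} (hα : 0 < α) (hα1 : α < 1)
    (hC : 0 ≤ C) (hk : ∀ a b, |k a - k b| ≤ C * |a - b|)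
    (hk0 : k 0 = 0) (hl : 0 < l) (t : ℝ) : |scF k α l t| ≤ domF α C t := by
  rcases eq_or_ne t 0 with rfl | ht0
  · have : scF k α l 0 = 0 := by simp [scF, scG]
    rw [this]
    simp only [domF, abs_zero]
    have : (0:ℝ) ≤ (0:ℝ) ^ (α - 1) := by positivity
    simp
    positivity
  have hb := scG_bound (α := α) hk hk0 hl t
  have hp : 0 < |t| := abs_pos.2 ht0
  have e : |t| ^ α = |t| ^ (α - 1) * |t| := by
    rw [Real.rpow_sub_one hp.ne']; field_simp
  have hq : 0 ≤ |t| ^ (α - 1) := by positivity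
  unfold scF domF
  by_cases h : t ∈ Set.Ioo (0:ℝ) 2
  · rw [Set.indicator_of_mem h, Set.indicator_of_mem h]
    have h1 := quot_lip hC (scG_lip hα hα1 hC hk hl h.1)
    have h2 : |scG k α l t / t| ≤ C * |t| ^ (α - 1) := by
      rw [abs_div, div_le_iff₀ hp, mul_assoc, ← e]; exact hb
    have h3 : C * |t| ^ (α - 1) ≤ 3 * C * (|t| ^ (α - 1) / (1 + |t|)) := by
      rw [mul_div_assoc', le_div_iff₀ (by positivity)]
      have : 1 + |t| ≤ 3 := by rw [abs_of_pos h.1]; linarith [h.2]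
      calc _ ≤ C * |t| ^ (α - 1) * 3 := by gcongr
        _ = _ := by ring
    exact (abs_add_le _ _).trans (by linarith)
  · rw [Set.indicator_of_notMem h, Set.indicator_of_notMem h, sub_zero, zero_add]
    have h1 : 1 + |t| ≤ 3 * |1 - t| := by
      rw [Set.mem_Ioo, not_and_or, not_lt, not_lt] at h
      rcases h with h | h
      · rw [abs_of_nonpos h, abs_of_nonneg (by linarith)]; linarith
      · rw [abs_of_nonneg (by linarith), abs_of_nonpos (by linarith)]; linarith
    have hne : (1 - t) ≠ 0 := by
      intro h0; rw [h0, abs_zero] at h1; linarith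
    have hne' : 0 < |1 - t| := abs_pos.2 hne
    rw [show scG k α l t / (1 - t) + scG k α l t / t = scG k α l t / t / (1 - t) by field_simp; ring,
      abs_div, abs_div, div_le_iff₀ hne', div_le_iff₀ hp]
    refine hb.trans ?_
    rw [e]
    have : C * (|t| ^ (α - 1) * |t|) * (1 + |t|) ≤ C * (|t| ^ (α - 1) * |t|) * (3 * |1 - t|) := by gcongr
    rw [← le_div_iff₀ (by positivity)] at this
    refine this.trans (le_of_eq ?_)
    field_simp

lemma integrable_base {α : ℝ} (hα : 0 < α) (hα1 : α < 1) :
    Integrable (fun t : ℝ => |t| ^ (α - 1) / (1 + |t|)) := by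
  have hm : Measurable (fun t : ℝ => |t| ^ (α - 1) / (1 + |t|)) := by fun_prop
  have h1 : IntegrableOn (fun t : ℝ => |t| ^ (α - 1) / (1 + |t|)) (Set.Ioo 0 1) := by
    refine Integrable.mono' ((intervalIntegral.integrableOn_Ioo_rpow_iff one_pos).2
      (show -1 < α - 1 by linarith)) hm.aestronglyMeasurable ?_
    refine (ae_restrict_iff' measurableSet_Ioo).2 (Eventually.of_forall fun t ht => ?_)
    have := ht.1
    rw [Real.norm_of_nonneg (by positivity), abs_of_pos ht.1]
    exact div_le_self (by positivity) (by linarith)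
  have h2 : IntegrableOn (fun t : ℝ => |t| ^ (α - 1) / (1 + |t|)) (Set.Ici 1) := by
    rw [integrableOn_Ici_iff_integrableOn_Ioi]
    refine Integrable.mono' (integrableOn_Ioi_rpow_of_lt
      (show α - 2 < -1 by linarith) one_pos) hm.aestronglyMeasurable ?_
    refine (ae_restrict_iff' measurableSet_Ioi).2 (Eventually.of_forall fun t ht => ?_)
    have ht0 : (0:ℝ) < t := zero_lt_one.trans ht
    rw [Real.norm_of_nonneg (by positivity), abs_of_pos ht0,
      show α - 1 = (α - 2) + 1 by ring, Real.rpow_add_one ht0.ne', div_le_iff₀ (by positivity)]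
    gcongr
    linarith
  have h3 : IntegrableOn (fun t : ℝ => |t| ^ (α - 1) / (1 + |t|)) (Set.Ioi 0) := by
    rw [← Set.Ioo_union_Ici_eq_Ioi one_pos]
    exact h1.union h2
  have h4 : IntegrableOn (fun t : ℝ => |t| ^ (α - 1) / (1 + |t|)) (Set.Iio 0) := by
    have h3' := (integrable_indicator_iff measurableSet_Ioi).2 h3
    rw [← integrable_indicator_iff measurableSet_Iio]
    refine h3'.comp_neg.congr (Eventually.of_forall fun t => ?_)
    beta_reduce
    by_cases ht : t < 0
    · rw [Set.indicator_of_mem (show -t ∈ Set.Ioi (0:ℝ) from neg_pos.2 ht),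
        Set.indicator_of_mem (show t ∈ Set.Iio (0:ℝ) from ht), abs_neg]
    · rw [Set.indicator_of_notMem (show -t ∉ Set.Ioi (0:ℝ) from fun h => ht (neg_pos.1 h)),
        Set.indicator_of_notMem (show t ∉ Set.Iio (0:ℝ) from ht)]
  rw [← integrableOn_univ, ← Set.Iic_union_Ioi (a := (0:ℝ)), integrableOn_union]
  exact ⟨(integrableOn_Iic_iff_integrableOn_Iio (by simp)).2 h4, h3⟩

lemma integrable_domF {α : ℝ} (hα : 0 < α) (hα1 : α < 1) (C : ℝ) : Integrable (domF α C) := by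
  unfold domF
  refine Integrable.add ?_ ((integrable_base hα hα1).const_mul _)
  rw [integrable_indicator_iff measurableSet_Ioo]
  exact integrableOn_const (by simp)

lemma integrable_scF {k : ℝ → ℝ} {C α l : ℝ} (hα : 0 < α) (hα1 : α < 1) (hm : Measurable k)
    (hC : 0 ≤ C) (hk : ∀ a b, |k a - k b| ≤ C * |a - b|)
    (hk0 : k 0 = 0) (hl : 0 < l) : Integrable (scF k α l) :=
  (integrable_domF hα hα1 C).mono' (measurable_scF hm α l).aestronglyMeasurable
    (Eventually.of_forall (scF_bound hα hα1 hC hk hk0 hl))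

lemma tendsto_scG {k : ℝ → ℝ} (hk : DifferentiableAt ℝ k 0) (hk0 : k 0 = 0) (α t : ℝ) :
    Tendsto (fun l => scG k α l t) (nhdsWithin 0 (Set.Ioi 0)) (nhds (deriv k 0 * scG id α 1 t)) := by
  have hd : HasDerivAt (fun l => k (l * |t| ^ α)) (deriv k 0 * |t| ^ α) 0 := by
    have h1 : HasDerivAt k (deriv k 0) ((0:ℝ) * |t| ^ α) := by
      rw [zero_mul]; exact hk.hasDerivAt
    exact h1.comp (0:ℝ) (hasDerivAt_mul_const (|t| ^ α))
  have hsub : Set.Ioi (0:ℝ) ⊆ {0}ᶜ := fun x hx => (Set.mem_Ioi.1 hx).ne'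
  have := (hasDerivAt_iff_tendsto_slope_zero.1 hd).mono_left (nhdsWithin_mono 0 hsub)
  have := this.const_mul (Real.sign t)
  simp only [zero_add, zero_mul, hk0, sub_zero, smul_eq_mul] at this
  convert this using 2
  · simp only [scG]; ring
  · simp only [scG, id]; ring

lemma tendsto_integral_scF {k : ℝ → ℝ} {C α : ℝ} (hα : 0 < α) (hα1 : α < 1) (hm : Measurable k)
    (hC : 0 ≤ C) (hk : ∀ a b, |k a - k b| ≤ C * |a - b|)
    (hk0 : k 0 = 0) (hd : DifferentiableAt ℝ k 0) :
    Tendsto (fun l => ∫ t, scF k α l t) (nhdsWithin 0 (Set.Ioi 0))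
      (nhds (deriv k 0 * ∫ t, scF id α 1 t)) := by
  rw [← integral_const_mul]
  refine tendsto_integral_filter_of_dominated_convergence (domF α C)
    (Eventually.of_forall fun l => (measurable_scF hm α l).aestronglyMeasurable) ?_
    (integrable_domF hα hα1 C) (Eventually.of_forall fun t => ?_)
  · filter_upwards [self_mem_nhdsWithin] with l hl
    exact Eventually.of_forall (scF_bound hα hα1 hC hk hk0 hl)
  · have h1 := tendsto_scG hd hk0 α t
    have h2 := tendsto_scG hd hk0 α 1
    unfold scF
    by_cases h : t ∈ Set.Ioo (0:ℝ) 2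
    · simp only [Set.indicator_of_mem h]
      convert ((h1.sub h2).div_const (1 - t)).add (h1.div_const t) using 2
      ring
    · simp only [Set.indicator_of_notMem h, sub_zero]
      convert (h1.div_const (1 - t)).add (h1.div_const t) using 2
      ring

lemma scG_id_pos {α t : ℝ} (ht : 0 < t) : scG id α 1 t = t ^ α := by
  simp [scG, Real.sign_of_pos ht, abs_of_pos ht]

lemma scG_id_neg {α t : ℝ} (ht : 0 < t) : scG id α 1 (-t) = - t ^ α := by
  simp [scG, Real.sign_of_neg (neg_neg_of_pos ht), abs_of_pos ht]

noncomputable def brk (t : ℝ) : ℝ := if 1 / 2 < t then 1 / t else - (1 / (1 - t))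

lemma fold_pointwise {α t : ℝ} (h0 : 0 < t) (h1 : t < 1) :
    (scF id α 1 t + scF id α 1 (-t)) + (t ^ 2)⁻¹ * (scF id α 1 t⁻¹ + scF id α 1 (-t⁻¹))
      = 2 * (t ^ (α - 1) - t ^ (1 - α)) / (1 - t ^ 2) + brk t := by
  have hi : 0 < t⁻¹ := inv_pos.2 h0
  have hP : 0 < t ^ α := by positivity
  have m1 : t ∈ Set.Ioo (0:ℝ) 2 := ⟨h0, by linarith⟩
  have m2 : -t ∉ Set.Ioo (0:ℝ) 2 := fun h => by linarith [h.1]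
  have m3 : -t⁻¹ ∉ Set.Ioo (0:ℝ) 2 := fun h => by linarith [h.1]
  have e1 : t ^ (α - 1) = t ^ α / t := Real.rpow_sub_one h0.ne' _
  have e2 : t ^ (1 - α) = t / t ^ α := by rw [Real.rpow_sub h0, Real.rpow_one]
  have n1 : 1 - t ≠ 0 := by linarith
  have n2 : 1 + t ≠ 0 := by linarith
  have n3 : 1 - t ^ 2 = (1 - t) * (1 + t) := by ring
  have n4 : 1 - t⁻¹ = -((1 - t) / t) := by field_simp; ring
  have n5 : 1 - -t⁻¹ = (1 + t) / t := by field_simp; ring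
  have n6 : 1 - -t = 1 + t := by ring
  unfold scF brk
  rw [Set.indicator_of_mem m1, Set.indicator_of_notMem m2, Set.indicator_of_notMem m3,
    scG_id_pos h0, scG_id_neg h0, scG_id_pos hi, scG_id_neg hi, scG_id_pos one_pos, Real.one_rpow,
    Real.inv_rpow h0.le, e1, e2, n3, n4, n5, n6]
  set P := t ^ α
  by_cases h : 1 / 2 < t
  · have m4 : t⁻¹ ∈ Set.Ioo (0:ℝ) 2 := ⟨hi, by
      rw [inv_lt_comm₀ h0 two_pos]; linarith⟩
    rw [Set.indicator_of_mem m4, if_pos h]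
    field_simp
    ring
  · have m4 : t⁻¹ ∉ Set.Ioo (0:ℝ) 2 := fun hh => by
      have := hh.2
      rw [inv_lt_comm₀ h0 two_pos] at this
      apply h; linarith
    rw [Set.indicator_of_notMem m4, if_neg h]
    field_simp
    ring

lemma measurable_brk : Measurable brk := by
  unfold brk
  exact Measurable.ite measurableSet_Ioi (by fun_prop) (by fun_prop)

lemma integrableOn_brk : IntegrableOn brk (Set.Ioo 0 1) := by
  refine Measure.integrableOn_of_bounded (M := 2) (by simp) measurable_brk.aestronglyMeasurable ?_
  refine (ae_restrict_iff' measurableSet_Ioo).2 (Eventually.of_forall fun t ht => ?_)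
  unfold brk
  split_ifs with h
  · rw [Real.norm_of_nonneg (one_div_nonneg.2 ht.1.le), div_le_iff₀ ht.1]; linarith
  · have : 0 < 1 - t := by linarith [ht.2]
    rw [norm_neg, Real.norm_of_nonneg (one_div_nonneg.2 this.le), div_le_iff₀ this]; linarith

lemma integral_brk : ∫ t in Set.Ioo (0:ℝ) 1, brk t = 0 := by
  rw [← integral_Ioc_eq_integral_Ioo, ← intervalIntegral.integral_of_le zero_le_one]
  have h1 := intervalIntegral.integral_comp_sub_left (a := 0) (b := 1) brk 1
  have h2 : ∫ t in (0:ℝ)..1, brk (1 - t) = ∫ t in (0:ℝ)..1, - brk t := by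
    refine intervalIntegral.integral_congr_ae ?_
    have : ∀ᵐ t : ℝ, t ≠ 1 / 2 := by simp [ae_iff]
    filter_upwards [this] with t ht _
    unfold brk
    rcases lt_or_gt_of_ne ht with h | h
    · rw [if_pos (by linarith), if_neg (by linarith)]; ring
    · rw [if_neg (by linarith), if_pos h]; ring
  rw [intervalIntegral.integral_neg] at h2
  simp only [sub_self, sub_zero] at h1
  linarith

lemma integral_scF_id {α : ℝ} (hα : 0 < α) (hα1 : α < 1) :
    ∫ t, scF id α 1 t = Real.pi * Real.cot (α * Real.pi / 2) := by
  have hF : Integrable (scF id α 1) :=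
    integrable_scF (C := 1) hα hα1 measurable_id zero_le_one (by simp) rfl one_pos
  set F := scF id α 1 with hFdef
  set H : ℝ → ℝ := fun t => F t + F (-t) with hHdef
  have hH : Integrable H := hF.add hF.comp_neg
  have s1 : ∫ t, F t = ∫ t in Set.Ioi (0:ℝ), H t := by
    rw [← intervalIntegral.integral_Iic_add_Ioi (b := 0) hF.integrableOn hF.integrableOn]
    have := integral_comp_neg_Ioi (0:ℝ) F
    rw [neg_zero] at this
    rw [← this, hHdef, integral_add hF.integrableOn hF.comp_neg.integrableOn, add_comm]
  have s2 : ∫ t in Set.Ioi (0:ℝ), H t = (∫ t in Set.Ioo (0:ℝ) 1, H t) + ∫ t in Set.Ioi (1:ℝ), H t := by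
    rw [← integral_Ioc_eq_integral_Ioo, ← setIntegral_union (Set.Ioc_disjoint_Ioi le_rfl)
      measurableSet_Ioi hH.integrableOn hH.integrableOn, Set.Ioc_union_Ioi_eq_Ioi zero_le_one]
  have him : (fun t : ℝ => t⁻¹) '' Set.Ioo 0 1 = Set.Ioi 1 := by
    ext y
    constructor
    · rintro ⟨t, ht, rfl⟩
      exact (one_lt_inv₀ ht.1).2 ht.2
    · intro hy
      have hy' : (1:ℝ) < y := hy
      exact ⟨y⁻¹, ⟨inv_pos.2 (by linarith), inv_lt_one_of_one_lt₀ hy'⟩, inv_inv y⟩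
  have hder : ∀ t ∈ Set.Ioo (0:ℝ) 1, HasDerivWithinAt (fun t : ℝ => t⁻¹) (-(t ^ 2)⁻¹) (Set.Ioo 0 1) t :=
    fun t ht => (hasDerivAt_inv ht.1.ne').hasDerivWithinAt
  have hinj : Set.InjOn (fun t : ℝ => t⁻¹) (Set.Ioo 0 1) := inv_injective.injOn
  have s3 := integral_image_eq_integral_abs_deriv_smul measurableSet_Ioo hder hinj H
  have i3 := (integrableOn_image_iff_integrableOn_abs_deriv_smul measurableSet_Ioo hder hinj H).1
    (by rw [him]; exact hH.integrableOn)
  rw [him] at s3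
  rw [s1, s2, s3, ← integral_add hH.integrableOn i3]
  have s4 : ∫ t in Set.Ioo (0:ℝ) 1, (H t + |-(t ^ 2)⁻¹| • H t⁻¹)
      = ∫ t in Set.Ioo (0:ℝ) 1, (2 * (t ^ (α - 1) - t ^ (1 - α)) / (1 - t ^ 2) + brk t) := by
    refine setIntegral_congr_fun measurableSet_Ioo fun t ht => ?_
    beta_reduce
    rw [← fold_pointwise ht.1 ht.2, abs_neg, abs_of_nonneg (by positivity), smul_eq_mul]
  have i4 : IntegrableOn (fun t : ℝ => 2 * (t ^ (α - 1) - t ^ (1 - α)) / (1 - t ^ 2)) (Set.Ioo 0 1) := by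
    have := ((hH.integrableOn (s := Set.Ioo 0 1)).add i3).sub integrableOn_brk
    refine this.congr ?_
    refine (ae_restrict_iff' measurableSet_Ioo).2 (Eventually.of_forall fun t ht => ?_)
    have e := fold_pointwise (α := α) ht.1 ht.2
    simp only [Pi.add_apply, Pi.sub_apply, abs_neg, smul_eq_mul]
    rw [abs_of_nonneg (by positivity : 0 ≤ (t ^ 2)⁻¹)]
    linarith
  rw [s4, integral_add i4 integrableOn_brk, integral_brk, add_zero, integral_unit_aux α hα hα1]

lemma tendsto_trunc {B : ℝ → ℝ} (hB : Integrable B) (a : ℝ) :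
    Tendsto (fun d : ℝ => ∫ t in {t : ℝ | d < |a - t|}, B t) (nhdsWithin 0 (Set.Ioi 0))
      (nhds (∫ t, B t)) := by
  have hms : ∀ d : ℝ, MeasurableSet {t : ℝ | d < |a - t|} := fun d =>
    measurableSet_lt measurable_const (by fun_prop)
  simp_rw [← integral_indicator (hms _)]
  refine tendsto_integral_filter_of_dominated_convergence (fun t => ‖B t‖)
    (Eventually.of_forall fun d => (hB.indicator (hms d)).aestronglyMeasurable)
    (Eventually.of_forall fun d => Eventually.of_forall fun t => norm_indicator_le_norm_self _ _)
    hB.norm ?_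
  have : ∀ᵐ t : ℝ, t ≠ a := by simp [ae_iff]
  filter_upwards [this] with t ht
  refine tendsto_const_nhds.congr' ?_
  have hp : 0 < |a - t| := abs_pos.2 (sub_ne_zero.2 ht.symm)
  filter_upwards [mem_nhdsWithin_of_mem_nhds (Iio_mem_nhds hp)] with d hd
  exact (Set.indicator_of_mem (show t ∈ {t : ℝ | d < |a - t|} from hd) _).symm

lemma integrableOn_comp {d : ℝ} (hd : 0 < d) (c : ℝ) :
    IntegrableOn (fun t => (Set.Ioo (0:ℝ) 2).indicator (fun _ => c) t / (1 - t))
      {t : ℝ | d < |1 - t|} := by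
  have hms : MeasurableSet {t : ℝ | d < |1 - t|} :=
    measurableSet_lt measurable_const (by fun_prop)
  have hi : Integrable (fun t => (Set.Ioo (0:ℝ) 2).indicator (fun _ => |c| / d) t) := by
    rw [integrable_indicator_iff measurableSet_Ioo]
    exact integrableOn_const (by simp)
  have hm : Measurable ((Set.Ioo (0:ℝ) 2).indicator (fun _ => c)) :=
    measurable_const.indicator measurableSet_Ioo
  refine Integrable.mono' hi.integrableOn (hm.div (by fun_prop)).aestronglyMeasurable ?_
  refine (ae_restrict_iff' hms).2 (Eventually.of_forall fun t ht => ?_)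
  have ht' : d < |1 - t| := ht
  by_cases h : t ∈ Set.Ioo (0:ℝ) 2
  · rw [Set.indicator_of_mem h, Set.indicator_of_mem h, norm_div, Real.norm_eq_abs, Real.norm_eq_abs]
    gcongr
  · rw [Set.indicator_of_notMem h, Set.indicator_of_notMem h]; simp

lemma integral_comp_zero (d c : ℝ) :
    ∫ t in {t : ℝ | d < |1 - t|}, (Set.Ioo (0:ℝ) 2).indicator (fun _ => c) t / (1 - t) = 0 := by
  have hms : MeasurableSet {t : ℝ | d < |1 - t|} :=
    measurableSet_lt measurable_const (by fun_prop)
  rw [← integral_indicator hms]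
  set φ : ℝ → ℝ := Set.indicator {t : ℝ | d < |1 - t|}
    (fun t => (Set.Ioo (0:ℝ) 2).indicator (fun _ => c) t / (1 - t)) with hφ
  have h1 : ∫ t, φ (2 - t) = ∫ t, φ t := integral_sub_left_eq_self φ volume 2
  have h2 : ∀ t, φ (2 - t) = - φ t := by
    intro t
    have e : 1 - (2 - t) = -(1 - t) := by ring
    have m1 : (2 - t ∈ {t : ℝ | d < |1 - t|}) ↔ t ∈ {t : ℝ | d < |1 - t|} := by
      simp only [Set.mem_ofPred_eq, e, abs_neg]
    have m2 : (2 - t ∈ Set.Ioo (0:ℝ) 2) ↔ t ∈ Set.Ioo (0:ℝ) 2 := by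
      simp only [Set.mem_Ioo]; constructor <;> rintro ⟨_, _⟩ <;> constructor <;> linarith
    simp only [hφ, Set.indicator_apply, m1, m2, e]
    split_ifs
    · exact div_neg c
    all_goals simp only [zero_div, neg_zero]
  simp_rw [h2, integral_neg] at h1
  linarith

lemma integrable_scG_div {k : ℝ → ℝ} {C α l R : ℝ} (hα : 0 < α) (hα1 : α < 1) (hm : Measurable k)
    (hC : 0 ≤ C) (hk : ∀ a b, |k a - k b| ≤ C * |a - b|) (hk0 : k 0 = 0) (hl : 0 < l)
    (hR : 0 ≤ R) (hsupp : ∀ x, R < |x| → k x = 0) :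
    Integrable (fun t => scG k α l t / t) := by
  set R' := (R / l) ^ (α⁻¹) with hR'
  have hR0 : 0 ≤ R' := by positivity
  refine ((integrable_base hα hα1).const_mul (C * (1 + R'))).mono'
    ((measurable_scG hm α l).div measurable_id).aestronglyMeasurable
    (Eventually.of_forall fun t => ?_)
  rcases eq_or_ne t 0 with rfl | ht0
  · have : (0:ℝ) ≤ |0| ^ (α - 1) := by positivity
    simp only [div_zero, norm_zero]
    positivity
  have hp : 0 < |t| := abs_pos.2 ht0
  have hq : 0 < |t| ^ (α - 1) := by positivity
  have e : |t| ^ α = |t| ^ (α - 1) * |t| := by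
    rw [Real.rpow_sub_one hp.ne']; field_simp
  have h2 : |scG k α l t / t| ≤ C * |t| ^ (α - 1) := by
    rw [abs_div, div_le_iff₀ hp, mul_assoc, ← e]; exact scG_bound hk hk0 hl t
  rw [Real.norm_eq_abs]
  by_cases h : |t| ≤ R'
  · refine h2.trans ?_
    rw [mul_div_assoc', le_div_iff₀ (by positivity)]
    calc C * |t| ^ (α - 1) * (1 + |t|) ≤ C * |t| ^ (α - 1) * (1 + R') := by gcongr
      _ = _ := by ring
  · have hlt : R' < |t| := not_le.1 h
    have h3 : R / l < |t| ^ α := by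
      have := Real.rpow_lt_rpow hR0 hlt hα
      rwa [hR', ← Real.rpow_mul (by positivity), inv_mul_cancel₀ hα.ne', Real.rpow_one] at this
    have h4 : k (l * |t| ^ α) = 0 := by
      apply hsupp
      rw [abs_of_nonneg (by positivity)]
      rw [div_lt_iff₀ hl] at h3
      linarith
    have : scG k α l t = 0 := by simp [scG, h4]
    rw [this, zero_div, abs_zero]
    positivity

lemma sign_mul' (a b : ℝ) : Real.sign (a * b) = Real.sign a * Real.sign b := by
  rcases lt_trichotomy a 0 with ha | rfl | ha <;> rcases lt_trichotomy b 0 with hb | rfl | hb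
  · simp [Real.sign_of_neg ha, Real.sign_of_neg hb, Real.sign_of_pos (mul_pos_of_neg_of_neg ha hb)]
  · simp
  · simp [Real.sign_of_neg ha, Real.sign_of_pos hb, Real.sign_of_neg (mul_neg_of_neg_of_pos ha hb)]
  · simp
  · simp
  · simp
  · simp [Real.sign_of_pos ha, Real.sign_of_neg hb, Real.sign_of_neg (mul_neg_of_pos_of_neg ha hb)]
  · simp
  · simp [Real.sign_of_pos ha, Real.sign_of_pos hb, Real.sign_of_pos (mul_pos ha hb)]

lemma g_scale {k : ℝ → ℝ} {α z : ℝ} (hz : z ≠ 0) (t : ℝ) :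
    Real.sign (z * t) * k (|z * t| ^ α) = Real.sign z * (|z| ^ α * scG k α (|z| ^ α) t) := by
  have hl : 0 < |z| ^ α := Real.rpow_pos_of_pos (abs_pos.2 hz) _
  rw [sign_mul', abs_mul, Real.mul_rpow (abs_nonneg _) (abs_nonneg _), scG]
  field_simp

lemma sign_div {z : ℝ} (hz : z ≠ 0) : Real.sign z / z = |z|⁻¹ := by
  rcases lt_or_gt_of_ne hz with h | h
  · rw [Real.sign_of_neg h, abs_of_neg h]; field_simp
  · rw [Real.sign_of_pos h, abs_of_pos h]; field_simp

lemma trunc_scale {k : ℝ → ℝ} {α z : ℝ} (hz : z ≠ 0) (ε : ℝ) :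
    ∫ y in {y : ℝ | ε < |z - y|}, (Real.sign y * k (|y| ^ α)) / (z - y)
      = |z| ^ α * ∫ t in {t : ℝ | ε / |z| < |1 - t|}, scG k α (|z| ^ α) t / (1 - t) := by
  have hz' : 0 < |z| := abs_pos.2 hz
  have hms : ∀ (a d : ℝ), MeasurableSet {t : ℝ | d < |a - t|} := fun a d =>
    measurableSet_lt measurable_const (by fun_prop)
  rw [← integral_indicator (hms _ _), ← integral_indicator (hms _ _)]
  set φ : ℝ → ℝ := Set.indicator {y : ℝ | ε < |z - y|}
    (fun y => (Real.sign y * k (|y| ^ α)) / (z - y)) with hφ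
  have h1 := Measure.integral_comp_mul_left φ z
  have h2 : ∀ t, φ (z * t) = (|z|⁻¹ * |z| ^ α) * Set.indicator {t : ℝ | ε / |z| < |1 - t|}
      (fun t => scG k α (|z| ^ α) t / (1 - t)) t := by
    intro t
    have e : z - z * t = z * (1 - t) := by ring
    have m : (z * t ∈ {y : ℝ | ε < |z - y|}) ↔ t ∈ {t : ℝ | ε / |z| < |1 - t|} := by
      simp only [Set.mem_ofPred_eq, e, abs_mul, div_lt_iff₀ hz', mul_comm]
    simp only [hφ, Set.indicator_apply, m]
    split_ifs
    · rw [g_scale hz, e, ← sign_div hz]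
      simp only [div_eq_mul_inv, mul_inv]
      ring
    · simp
  simp_rw [h2] at h1
  rw [integral_const_mul, abs_inv, smul_eq_mul, mul_assoc] at h1
  exact (mul_left_cancel₀ (inv_pos.2 hz').ne' h1).symm

lemma zero_scale {k : ℝ → ℝ} {α z : ℝ} (hz : z ≠ 0) (t : ℝ) :
    (Real.sign (z * t) * k (|z * t| ^ α)) / (0 - z * t)
      = (-(|z|⁻¹ * |z| ^ α)) * (scG k α (|z| ^ α) t / t) := by
  rw [g_scale hz, ← sign_div hz, zero_sub]
  simp only [div_eq_mul_inv, inv_neg, mul_inv]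
  ring

lemma hilbert_diff {k : ℝ → ℝ} {C α R z : ℝ} (hα : 0 < α) (hα1 : α < 1) (hm : Measurable k)
    (hC : 0 ≤ C) (hk : ∀ a b, |k a - k b| ≤ C * |a - b|) (hk0 : k 0 = 0)
    (hR : 0 ≤ R) (hsupp : ∀ x, R < |x| → k x = 0) (h : ℝ → ℝ)
    (hHT : IsPVHilbert (fun z : ℝ => Real.sign z * k (|z| ^ α)) h) (hz : z ≠ 0) :
    (h z - h 0) / |z| ^ α = Real.pi⁻¹ * ∫ t, scF k α (|z| ^ α) t := by
  have hz' : 0 < |z| := abs_pos.2 hz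
  set l := |z| ^ α with hl'
  have hl : 0 < l := Real.rpow_pos_of_pos hz' _
  have iQ := integrable_scG_div hα hα1 hm hC hk hk0 hl hR hsupp
  have iF := integrable_scF hα hα1 hm hC hk hk0 hl
  set Q : ℝ → ℝ := fun t => scG k α l t / t with hQ
  set B : ℝ → ℝ := fun t =>
    (scG k α l t - (Set.Ioo (0:ℝ) 2).indicator (fun _ => scG k α l 1) t) / (1 - t) with hB
  have iB : Integrable B := by
    refine (iF.sub iQ).congr (Eventually.of_forall fun t => ?_)
    simp [hQ, hB, scF]
  have hsum : ∫ t, scF k α l t = (∫ t, B t) + ∫ t, Q t := integral_add iB iQ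
  -- value at `z`
  have hz1 : h z = Real.pi⁻¹ * (l * ∫ t, B t) := by
    refine tendsto_nhds_unique (hHT z) ?_
    refine Tendsto.const_mul _ ?_
    have hsc : Tendsto (fun ε : ℝ => ε / |z|) (nhdsWithin 0 (Set.Ioi 0)) (nhdsWithin 0 (Set.Ioi 0)) := by
      refine tendsto_nhdsWithin_iff.2 ⟨?_, ?_⟩
      · have : Tendsto (fun ε : ℝ => ε / |z|) (nhds 0) (nhds (0 / |z|)) :=
          tendsto_id.div_const _
        rw [zero_div] at this
        exact this.mono_left nhdsWithin_le_nhds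
      · filter_upwards [self_mem_nhdsWithin] with ε hε
        exact div_pos hε hz'
    refine (((tendsto_trunc iB 1).comp hsc).const_mul l).congr' ?_
    filter_upwards [self_mem_nhdsWithin] with ε hε
    have hd : 0 < ε / |z| := div_pos hε hz'
    rw [trunc_scale hz, ← hl']
    congr 1
    simp only [Function.comp]
    rw [← add_zero (∫ t in {t : ℝ | ε / |z| < |1 - t|}, B t),
      ← integral_comp_zero (ε / |z|) (scG k α l 1),
      ← integral_add iB.integrableOn (integrableOn_comp hd _)]
    congr 1
    ext t
    simp only [hB]
    ring
  have h01 : h 0 = Real.pi⁻¹ * (-(l * ∫ t, Q t)) := by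
    refine tendsto_nhds_unique (hHT 0) ?_
    refine Tendsto.const_mul _ ?_
    set φ : ℝ → ℝ := fun y => (Real.sign y * k (|y| ^ α)) / (0 - y) with hφ
    have h2 : ∀ t, φ (z * t) = (-(|z|⁻¹ * l)) * Q t := fun t => zero_scale hz t
    have iφ : Integrable φ := by
      rw [← integrable_comp_mul_left_iff φ hz]
      simp_rw [h2]
      exact iQ.const_mul _
    have h1 := Measure.integral_comp_mul_left φ z
    simp_rw [h2] at h1
    rw [integral_const_mul, abs_inv, smul_eq_mul, neg_mul, mul_assoc, ← mul_neg] at h1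
    rw [mul_left_cancel₀ (inv_pos.2 hz').ne' h1]
    exact tendsto_trunc iφ 0
  rw [hz1, h01, hsum]
  field_simp
  ring

/-- Behaviour of the Hilbert transform of `sgn(z)·k(|z|^α)` near the origin. -/
theorem hilbert_holder_asymptotics (α : ℝ) (hα : 0 < α) (hα1 : α < 1)
    (k : ℝ → ℝ) (hk : ContDiff ℝ (⊤ : ℕ∞) k) (hksupp : HasCompactSupport k) (hk0 : k 0 = 0)
    (h : ℝ → ℝ)
    (hHT : IsPVHilbert (fun z : ℝ => Real.sign z * k (|z| ^ α)) h) :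
    Tendsto (fun z : ℝ => (h z - h 0) / |z| ^ α)
      (nhdsWithin 0 {(0 : ℝ)}ᶜ)
      (nhds (Real.cot (α * Real.pi / 2) * deriv k 0)) := by
  obtain ⟨K, hK⟩ := hk.lipschitzWith_of_hasCompactSupport hksupp (by simp)
  have hlip : ∀ a b, |k a - k b| ≤ (K : ℝ) * |a - b| := fun a b => by
    simpa [Real.dist_eq] using hK.dist_le_mul a b
  obtain ⟨R, hRpos, hR⟩ := hksupp.exists_pos_le_norm
  have hsupp : ∀ x, R < |x| → k x = 0 := fun x hx => hR x hx.le
  have hm : Measurable k := hk.continuous.measurable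
  have hd : DifferentiableAt ℝ k 0 := hk.differentiable (by simp) 0
  have hlim := tendsto_integral_scF hα hα1 hm K.coe_nonneg hlip hk0 hd
  have hsc : Tendsto (fun z : ℝ => |z| ^ α) (nhdsWithin 0 {(0 : ℝ)}ᶜ) (nhdsWithin 0 (Set.Ioi 0)) := by
    refine tendsto_nhdsWithin_iff.2 ⟨?_, ?_⟩
    · have hc : Continuous (fun z : ℝ => |z| ^ α) := continuous_abs.rpow_const fun _ => Or.inr hα.le
      have := hc.tendsto 0
      rw [abs_zero, Real.zero_rpow hα.ne'] at this
      exact this.mono_left nhdsWithin_le_nhds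
    · filter_upwards [self_mem_nhdsWithin] with z hz
      exact Real.rpow_pos_of_pos (abs_pos.2 hz) _
  have key := (hlim.comp hsc).const_mul Real.pi⁻¹
  rw [integral_scF_id hα hα1] at key
  have e : Real.pi⁻¹ * (deriv k 0 * (Real.pi * Real.cot (α * Real.pi / 2)))
      = Real.cot (α * Real.pi / 2) * deriv k 0 := by
    have := Real.pi_ne_zero
    field_simp
  rw [e] at key
  refine key.congr' ?_
  filter_upwards [self_mem_nhdsWithin] with z hz
  exact (hilbert_diff hα hα1 hm K.coe_nonneg hlip hk0 hRpos.le hsupp h hHT hz).symm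
end

section
/- For every 0 < α < 1, the principal value integral of 1/((1−z)|z|^{1−α}) over the real line equals π·cot(απ/2); that is, lim_{ε → 0⁺} ∫_{{z ∈ ℝ : |z − 1| > ε}} |z|^{α−1}/(1 − z) dz = π·cot(απ/2). (The integrand is absolutely integrable near z = 0 and near infinity since 0 < α < 1, so only the singularity at z = 1 requires a principal value.) -/
open MeasureTheory Filter

theorem cotser (α : ℝ) (hα : 0 < α) (hα1 : α < 1) :
    HasSum (fun n : ℕ => 2 / (α + 2 * n) - 2 / (2 * n + 2 - α))
      (Real.pi * Real.cot (α * Real.pi / 2)) := by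
  have hx : ((α / 2 : ℝ) : ℂ) ∈ Complex.integerComplement := by
    rintro ⟨k, hk⟩
    have h : (k : ℝ) = α / 2 := by exact_mod_cast hk
    have h1 : (0 : ℝ) < k := by rw [h]; linarith
    have h2 : (k : ℝ) < 1 := by rw [h]; linarith
    norm_cast at h1 h2
    omega
  have key := tendsto_logDeriv_euler_cot_sub hx
  have key2 : Tendsto (fun n : ℕ => ∑ j ∈ Finset.range n,
      (1 / (α / 2 - (j + 1)) + 1 / (α / 2 + (j + 1)))) atTop
      (nhds (Real.pi * Real.cot (Real.pi * (α / 2)) - 1 / (α / 2))) := by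
    have := (Complex.continuous_re.tendsto _).comp key
    refine (this.congr ?_).trans_eq ?_
    · intro n
      simp only [Function.comp, cotTerm]
      rw [← Complex.ofReal_re (∑ j ∈ Finset.range n, _)]
      push_cast
      rfl
    · congr 1
      rw [← Complex.ofReal_re (_ - _)]
      push_cast
      rfl
  have key3 : Tendsto (fun n : ℕ => 1 / (α / 2 + n)) atTop (nhds 0) := by
    have : Tendsto (fun n : ℕ => α / 2 + (n : ℝ)) atTop atTop :=
      tendsto_atTop_add_const_left _ _ tendsto_natCast_atTop_atTop
    simp only [one_div]
    exact this.inv_tendsto_atTop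
  rw [hasSum_iff_tendsto_nat_of_nonneg]
  · have h := (key2.add_const (1 / (α / 2))).sub key3
    refine (h.congr ?_).trans_eq ?_
    · intro n
      induction n with
      | zero => simp
      | succ n ih =>
        rw [Finset.sum_range_succ, Finset.sum_range_succ, ← ih]
        have e1 : 2 / (α + 2 * n) = 1 / (α / 2 + n) := by field_simp
        have e2 : 2 / (2 * n + 2 - α) = - (1 / (α / 2 - (n + 1))) := by
          rw [← one_div_neg_eq_neg_one_div]
          have : 2 * n + 2 - α ≠ 0 := by
            have : (0 : ℝ) ≤ n := n.cast_nonneg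
            linarith
          have : -(α / 2 - (n + 1)) ≠ 0 := by
            have : (0 : ℝ) ≤ n := n.cast_nonneg
            linarith
          rw [div_eq_div_iff (by assumption) (by assumption)]
          ring
        rw [e1, e2]
        push_cast
        ring
    · congr 1
      rw [show α * Real.pi / 2 = Real.pi * (α / 2) by ring]
      ring
  · intro n
    have : (0 : ℝ) ≤ n := n.cast_nonneg
    rw [sub_nonneg]
    apply div_le_div_of_nonneg_left <;> linarith

theorem fold_integral (α : ℝ) (hα : 0 < α) (hα1 : α < 1) :
    IntervalIntegrable (fun z : ℝ => 2 * (z ^ (α - 1) - z ^ (1 - α)) / (1 - z ^ 2)) volume 0 1 ∧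
    ∫ z in (0:ℝ)..1, 2 * (z ^ (α - 1) - z ^ (1 - α)) / (1 - z ^ 2) =
      Real.pi * Real.cot (α * Real.pi / 2) := by
  set F : ℕ → ℝ → ℝ := fun n z => 2 * (z ^ (α - 1 + 2 * n) - z ^ (1 - α + 2 * n)) with hF
  have hn : ∀ n : ℕ, (0 : ℝ) ≤ n := fun n => n.cast_nonneg
  have i1 : ∀ n : ℕ, IntervalIntegrable (fun z : ℝ => z ^ (α - 1 + 2 * n)) volume 0 1 := fun n =>
    intervalIntegral.intervalIntegrable_rpow' (by linarith [hn n])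
  have i2 : ∀ n : ℕ, IntervalIntegrable (fun z : ℝ => z ^ (1 - α + 2 * n)) volume 0 1 := fun n =>
    intervalIntegral.intervalIntegrable_rpow' (by linarith [hn n])
  have iF : ∀ n, IntervalIntegrable (F n) volume 0 1 := fun n => ((i1 n).sub (i2 n)).const_mul 2
  have vF : ∀ n : ℕ, ∫ z in (0:ℝ)..1, F n z = 2 / (α + 2 * n) - 2 / (2 * n + 2 - α) := by
    intro n
    simp only [hF]
    rw [intervalIntegral.integral_const_mul, intervalIntegral.integral_sub (i1 n) (i2 n),
      integral_rpow (Or.inl (by linarith [hn n])), integral_rpow (Or.inl (by linarith [hn n])),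
      Real.zero_rpow (by linarith [hn n]), Real.zero_rpow (by linarith [hn n])]
    simp only [Real.one_rpow, sub_zero]
    rw [show α - 1 + 2 * (n:ℝ) + 1 = α + 2 * n by ring,
      show 1 - α + 2 * (n:ℝ) + 1 = 2 * n + 2 - α by ring]
    ring
  have hser := cotser α hα hα1
  have pos : ∀ n, ∀ z ∈ Set.Ioc (0:ℝ) 1, 0 ≤ F n z := by
    intro n z hz
    have := Real.rpow_le_rpow_of_exponent_ge hz.1 hz.2
      (show α - 1 + 2 * (n:ℝ) ≤ 1 - α + 2 * n by linarith)
    simp only [hF]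
    linarith
  have hs := hasSum_integral_of_summable_integral_norm (μ := volume.restrict (Set.Ioc (0:ℝ) 1))
    (F := F) (fun n => (intervalIntegrable_iff_integrableOn_Ioc_of_le zero_le_one).1 (iF n)) (by
      refine hser.summable.congr fun n => ?_
      rw [← vF n, intervalIntegral.integral_of_le zero_le_one]
      refine setIntegral_congr_fun measurableSet_Ioc fun z hz => ?_
      rw [Real.norm_of_nonneg (pos n z hz)])
  have hfun : ∀ z ∈ Set.Ioc (0:ℝ) 1, ∑' n, F n z = 2 * (z ^ (α - 1) - z ^ (1 - α)) / (1 - z ^ 2) := by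
    intro z hz
    rcases eq_or_lt_of_le hz.2 with h | h
    · subst h; simp [hF]
    · have : ∀ n : ℕ, F n z = 2 * (z ^ (α - 1) - z ^ (1 - α)) * (z ^ 2) ^ n := by
        intro n
        simp only [hF]
        rw [Real.rpow_add hz.1, Real.rpow_add hz.1, ← pow_mul, ← Real.rpow_natCast z (2 * n)]
        push_cast
        ring
      simp_rw [this]
      rw [tsum_mul_left, tsum_geometric_of_lt_one (by positivity) (by nlinarith [hz.1])]
      rfl
  rw [setIntegral_congr_fun measurableSet_Ioc hfun, ← intervalIntegral.integral_of_le zero_le_one]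
    at hs
  simp_rw [← intervalIntegral.integral_of_le (zero_le_one (α := ℝ)), vF] at hs
  have heq := hs.unique hser
  refine ⟨?_, heq⟩
  by_contra hni
  rw [intervalIntegral.integral_undef hni] at heq
  have p := Real.pi_pos
  have : 0 < Real.pi * Real.cot (α * Real.pi / 2) := by
    rw [Real.cot_eq_cos_div_sin]
    have := Real.sin_pos_of_pos_of_lt_pi (x := α * Real.pi / 2) (by positivity) (by nlinarith)
    have := Real.cos_pos_of_mem_Ioo (x := α * Real.pi / 2) ⟨by nlinarith, by nlinarith⟩
    positivity
  linarith

theorem inv_image (c : ℝ) (hc : 0 < c) : (fun w : ℝ => w⁻¹) '' Set.Ioo 0 c⁻¹ = Set.Ioi c := by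
  ext z
  constructor
  · rintro ⟨w, hw, rfl⟩
    exact (lt_inv_comm₀ hw.1 hc).1 hw.2
  · intro hz
    have hz : c < z := hz
    exact ⟨z⁻¹, ⟨inv_pos.2 (hc.trans hz), (inv_lt_inv₀ (hc.trans hz) hc).2 hz⟩, inv_inv z⟩

theorem inv_subst (c : ℝ) (hc : 0 < c) (φ ψ : ℝ → ℝ)
    (h : ∀ w ∈ Set.Ioo 0 c⁻¹, (w ^ 2)⁻¹ * φ w⁻¹ = ψ w)
    (hi : IntervalIntegrable ψ volume 0 c⁻¹) :
    IntegrableOn φ (Set.Ioi c) ∧ ∫ z in Set.Ioi c, φ z = ∫ w in (0:ℝ)..c⁻¹, ψ w := by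
  have hd : ∀ x ∈ Set.Ioo 0 c⁻¹, HasDerivWithinAt (fun w : ℝ => w⁻¹) (-(x ^ 2)⁻¹) (Set.Ioo 0 c⁻¹) x :=
    fun x hx => (hasDerivAt_inv hx.1.ne').hasDerivWithinAt
  have hc' : 0 ≤ c⁻¹ := by positivity
  have hinj : Set.InjOn (fun w : ℝ => w⁻¹) (Set.Ioo 0 c⁻¹) := inv_injective.injOn
  have hcg : Set.EqOn (fun x => |(-(x ^ 2)⁻¹)| • φ x⁻¹) ψ (Set.Ioo 0 c⁻¹) := by
    intro x hx
    simp only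
    rw [abs_neg, abs_of_nonneg (by positivity), smul_eq_mul, h x hx]
  rw [← inv_image c hc, integrableOn_image_iff_integrableOn_abs_deriv_smul measurableSet_Ioo hd hinj,
    integral_image_eq_integral_abs_deriv_smul measurableSet_Ioo hd hinj,
    integrableOn_congr_fun hcg measurableSet_Ioo, setIntegral_congr_fun measurableSet_Ioo hcg,
    intervalIntegral.integral_of_le hc', integral_Ioc_eq_integral_Ioo]
  exact ⟨(intervalIntegrable_iff_integrableOn_Ioo_of_le hc').1 hi, rfl⟩

theorem neg_part (α : ℝ) (hα : 0 < α) (hα1 : α < 1) :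
    IntegrableOn (fun z : ℝ => |z| ^ (α - 1) / (1 - z)) (Set.Iic 0) ∧
    IntervalIntegrable (fun z : ℝ => (z ^ (α - 1) + z ^ (-α)) / (1 + z)) volume 0 1 ∧
    ∫ z in Set.Iic (0:ℝ), |z| ^ (α - 1) / (1 - z) =
      ∫ z in (0:ℝ)..1, (z ^ (α - 1) + z ^ (-α)) / (1 + z) := by
  have hc : ContinuousOn (fun z : ℝ => (1 + z)⁻¹) (Set.uIcc 0 1) := by
    rw [Set.uIcc_of_le zero_le_one]
    refine ContinuousOn.inv₀ (by fun_prop) fun z hz => ?_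
    linarith [hz.1]
  have i1 : IntervalIntegrable (fun z : ℝ => z ^ (α - 1) / (1 + z)) volume 0 1 :=
    (intervalIntegral.intervalIntegrable_rpow' (by linarith)).mul_continuousOn hc
  have i2 : IntervalIntegrable (fun z : ℝ => z ^ (-α) / (1 + z)) volume 0 1 :=
    (intervalIntegral.intervalIntegrable_rpow' (by linarith)).mul_continuousOn hc
  obtain ⟨i3, v3⟩ := inv_subst 1 one_pos (fun z : ℝ => z ^ (α - 1) / (1 + z))
    (fun z : ℝ => z ^ (-α) / (1 + z)) (by
      intro w hw
      have hw0 : 0 < w := hw.1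
      rw [Real.inv_rpow hw0.le, ← Real.rpow_neg hw0.le, show -(α - 1) = -α + 1 by ring,
        Real.rpow_add_one hw0.ne']
      have : w + 1 ≠ 0 := by linarith
      have : 1 + w ≠ 0 := by linarith
      field_simp
      ring) (by simpa using i2)
  rw [inv_one] at v3
  have i1' := (intervalIntegrable_iff_integrableOn_Ioc_of_le zero_le_one).1 i1
  have hu : Set.Ioc (0:ℝ) 1 ∪ Set.Ioi 1 = Set.Ioi 0 := Set.Ioc_union_Ioi_eq_Ioi zero_le_one
  have i4 : IntegrableOn (fun z : ℝ => z ^ (α - 1) / (1 + z)) (Set.Ioi 0) := by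
    rw [← hu]; exact i1'.union i3
  have hcg : Set.EqOn (fun z : ℝ => |z| ^ (α - 1) / (1 - z))
      (fun z : ℝ => (-z) ^ (α - 1) / (1 + -z)) (Set.Iic 0) := by
    intro z hz
    have hz : z ≤ 0 := hz
    simp only
    rw [abs_of_nonpos hz]; rfl
  refine ⟨?_, ?_, ?_⟩
  · rw [integrableOn_congr_fun hcg measurableSet_Iic]
    have := (integrableOn_Ici_iff_integrableOn_Ioi (by simp)).2 i4
    have := this.comp_neg
    simpa using this
  · simp_rw [add_div]; exact i1.add i2
  · rw [setIntegral_congr_fun measurableSet_Iic hcg,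
      integral_comp_neg_Iic 0 (fun z : ℝ => z ^ (α - 1) / (1 + z)), neg_zero, ← hu,
      setIntegral_union (Set.Ioc_disjoint_Ioi le_rfl) measurableSet_Ioi i1' i3, v3,
      ← intervalIntegral.integral_of_le zero_le_one]
    simp_rw [add_div]
    rw [intervalIntegral.integral_add i1 i2]

theorem int_sub (β b : ℝ) (hβ : -1 < β) (hb : b < 1) (hb0 : 0 ≤ b) :
    IntervalIntegrable (fun z : ℝ => z ^ β / (1 - z)) volume 0 b := by
  have hc : ContinuousOn (fun z : ℝ => (1 - z)⁻¹) (Set.uIcc 0 b) := by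
    rw [Set.uIcc_of_le hb0]
    refine ContinuousOn.inv₀ (by fun_prop) fun z hz => ?_
    linarith [hz.2]
  exact (intervalIntegral.intervalIntegrable_rpow' hβ).mul_continuousOn hc

theorem decomp (α : ℝ) (hα : 0 < α) (hα1 : α < 1) (ε : ℝ) (h0 : 0 < ε) (h1 : ε < 1) :
    ∫ z in {z : ℝ | ε < |z - 1|}, |z| ^ (α - 1) / (1 - z) =
      (∫ z in (0:ℝ)..1, (z ^ (α - 1) + z ^ (-α)) / (1 + z))
      + (∫ z in (0:ℝ)..(1 - ε), 2 * (z ^ (α - 1) - z ^ (1 - α)) / (1 - z ^ 2))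
      - (∫ z in (0:ℝ)..(1 - ε), (z ^ (α - 1) + z ^ (-α)) / (1 + z))
      - (∫ z in (1 - ε)..(1 + ε)⁻¹, z ^ (-α) / (1 - z)) := by
  obtain ⟨n1, n2, n3⟩ := neg_part α hα hα1
  have hE : (1 + ε)⁻¹ < 1 := inv_lt_one_of_one_lt₀ (by linarith)
  have hE0 : 0 < (1 + ε)⁻¹ := by positivity
  have hb : 0 ≤ 1 - ε := by linarith
  have iP := int_sub (α - 1) (1 - ε) (by linarith) (by linarith) hb
  have iQ := int_sub (-α) (1 - ε) (by linarith) (by linarith) hb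
  have iQ' := int_sub (-α) (1 + ε)⁻¹ (by linarith) hE hE0.le
  have iB : IntervalIntegrable (fun z : ℝ => (z ^ (α - 1) + z ^ (-α)) / (1 + z)) volume 0 (1 - ε) :=
    n2.mono_set (by
      rw [Set.uIcc_of_le hb, Set.uIcc_of_le zero_le_one]
      exact Set.Icc_subset_Icc_right (by linarith))
  obtain ⟨p1, p2⟩ := inv_subst (1 + ε) (by linarith) (fun z : ℝ => |z| ^ (α - 1) / (1 - z))
    (fun z : ℝ => -(z ^ (-α) / (1 - z))) (by
      intro w hw
      have hw0 : 0 < w := hw.1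
      have hw1 : w < 1 := hw.2.trans hE
      rw [abs_of_pos (by positivity), Real.inv_rpow hw0.le, ← Real.rpow_neg hw0.le,
        show -(α - 1) = -α + 1 by ring, Real.rpow_add_one hw0.ne']
      have h1 : w - 1 ≠ 0 := by linarith
      have h2 : 1 - w ≠ 0 := by linarith
      have h3 : 1 - w⁻¹ = - ((1 - w) / w) := by field_simp; ring
      rw [h3]
      field_simp) iQ'.neg
  rw [intervalIntegral.integral_neg] at p2
  have hcg : Set.EqOn (fun z : ℝ => |z| ^ (α - 1) / (1 - z))
      (fun z : ℝ => z ^ (α - 1) / (1 - z)) (Set.Ioo 0 (1 - ε)) := by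
    intro z hz
    simp only
    rw [abs_of_pos hz.1]
  have m1 : IntegrableOn (fun z : ℝ => |z| ^ (α - 1) / (1 - z)) (Set.Ioo 0 (1 - ε)) := by
    rw [integrableOn_congr_fun hcg measurableSet_Ioo]
    exact (intervalIntegrable_iff_integrableOn_Ioo_of_le hb).1 iP
  have m2 : ∫ z in Set.Ioo 0 (1 - ε), |z| ^ (α - 1) / (1 - z) =
      ∫ z in (0:ℝ)..(1 - ε), z ^ (α - 1) / (1 - z) := by
    rw [setIntegral_congr_fun measurableSet_Ioo hcg, intervalIntegral.integral_of_le hb,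
      integral_Ioc_eq_integral_Ioo]
  have hS : {z : ℝ | ε < |z - 1|} = (Set.Iic 0 ∪ Set.Ioo 0 (1 - ε)) ∪ Set.Ioi (1 + ε) := by
    ext z
    simp only [Set.mem_ofPred_eq, Set.mem_union, Set.mem_Iic, Set.mem_Ioo, Set.mem_Ioi, lt_abs]
    constructor
    · rintro (h | h)
      · right; linarith
      · left
        rcases le_or_gt z 0 with h' | h'
        · left; exact h'
        · right; exact ⟨h', by linarith⟩
    · rintro ((h | h) | h)
      · right; linarith
      · right; linarith [h.2]
      · left; linarith
  have d1 : Disjoint (Set.Iic (0:ℝ)) (Set.Ioo 0 (1 - ε)) := by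
    rw [Set.disjoint_left]
    intro z hz hz'
    exact absurd hz'.1 (not_lt.2 hz)
  have d2 : Disjoint (Set.Iic (0:ℝ) ∪ Set.Ioo 0 (1 - ε)) (Set.Ioi (1 + ε)) := by
    rw [Set.disjoint_left]
    rintro z (hz | hz) hz'
    · have a : z ≤ 0 := hz
      have b : 1 + ε < z := hz'
      linarith
    · have a := hz.2
      have b : 1 + ε < z := hz'
      linarith
  rw [hS, setIntegral_union d2 measurableSet_Ioi (n1.union m1) p1,
    setIntegral_union d1 measurableSet_Ioo n1 m1, n3, m2, p2,
    ← intervalIntegral.integral_add_adjacent_intervals iQ (iQ.symm.trans iQ')]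
  have hh : ∫ z in (0:ℝ)..(1 - ε), 2 * (z ^ (α - 1) - z ^ (1 - α)) / (1 - z ^ 2) =
      ∫ z in (0:ℝ)..(1 - ε), (z ^ (α - 1) / (1 - z) - z ^ (-α) / (1 - z)) +
        (z ^ (α - 1) + z ^ (-α)) / (1 + z) := by
    rw [intervalIntegral.integral_of_le hb, intervalIntegral.integral_of_le hb]
    refine setIntegral_congr_fun measurableSet_Ioc fun z hz => ?_
    have hz0 : 0 < z := hz.1
    have h2 : 1 - z ≠ 0 := by linarith [hz.2]
    have h3 : 1 + z ≠ 0 := by linarith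
    rw [show 1 - α = -α + 1 by ring, Real.rpow_add_one hz0.ne',
      show 1 - z ^ 2 = (1 - z) * (1 + z) by ring]
    field_simp
    ring
  rw [hh, intervalIntegral.integral_add (iP.sub iQ) iB, intervalIntegral.integral_sub iP iQ]
  ring

theorem error_tendsto (α : ℝ) (hα : 0 < α) (hα1 : α < 1) :
    Tendsto (fun ε : ℝ => ∫ z in (1 - ε)..(1 + ε)⁻¹, z ^ (-α) / (1 - z))
      (nhdsWithin 0 (Set.Ioi 0)) (nhds 0) := by
  have hlim : Tendsto (fun ε : ℝ => (1 - ε) ^ (-α) * ε) (nhdsWithin 0 (Set.Ioi 0)) (nhds 0) := by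
    have : ContinuousAt (fun ε : ℝ => (1 - ε) ^ (-α) * ε) 0 := by
      refine ContinuousAt.mul (ContinuousAt.rpow_const (by fun_prop) (Or.inl (by norm_num))) continuousAt_id
    have h := this.tendsto
    simp only [mul_zero] at h
    exact h.mono_left nhdsWithin_le_nhds
  refine squeeze_zero_norm' ?_ hlim
  filter_upwards [Ioo_mem_nhdsGT (show (0:ℝ) < 1 by norm_num)] with ε hε
  have h0 := hε.1
  have h1 := hε.2
  have hle : 1 - ε ≤ (1 + ε)⁻¹ := by
    rw [le_inv_comm₀ (by linarith) (by linarith), inv_eq_one_div, le_div_iff₀ (by linarith)]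
    nlinarith
  have hp : 0 ≤ (1 - ε) ^ (-α) := Real.rpow_nonneg (by linarith) _
  have hd : 1 - (1 + ε)⁻¹ = ε / (1 + ε) := by field_simp; ring
  have := intervalIntegral.norm_integral_le_of_norm_le_const (a := 1 - ε) (b := (1 + ε)⁻¹)
    (f := fun z : ℝ => z ^ (-α) / (1 - z)) (C := (1 - ε) ^ (-α) / (ε / (1 + ε))) (by
      intro z hz
      rw [Set.uIoc_of_le hle] at hz
      have hz0 : 0 < z := by linarith [hz.1]
      have hq : 0 < ε / (1 + ε) := by positivity
      have hz1 : ε / (1 + ε) ≤ 1 - z := by rw [← hd]; linarith [hz.2]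
      rw [Real.norm_of_nonneg (div_nonneg (Real.rpow_nonneg hz0.le _) (by linarith))]
      refine div_le_div₀ hp ?_ hq hz1
      exact Real.rpow_le_rpow_of_nonpos (by linarith) hz.1.le (by linarith))
  refine this.trans (le_of_eq ?_)
  rw [abs_of_nonneg (by linarith)]
  have : (1 + ε)⁻¹ - (1 - ε) = ε ^ 2 / (1 + ε) := by field_simp; ring
  rw [this]
  field_simp

theorem prim (f : ℝ → ℝ) (hf : IntervalIntegrable f volume 0 1) :
    Tendsto (fun ε : ℝ => ∫ z in (0:ℝ)..(1 - ε), f z) (nhdsWithin 0 (Set.Ioi 0))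
      (nhds (∫ z in (0:ℝ)..1, f z)) := by
  have h := intervalIntegral.continuousOn_primitive_interval' hf Set.left_mem_uIcc 1 Set.right_mem_uIcc
  refine Tendsto.comp (g := fun b => ∫ z in (0:ℝ)..b, f z) h ?_
  refine tendsto_nhdsWithin_iff.2 ⟨?_, ?_⟩
  · have : Tendsto (fun ε : ℝ => 1 - ε) (nhds 0) (nhds (1 - 0)) := (continuous_const.sub continuous_id).tendsto 0
    rw [sub_zero] at this
    exact this.mono_left nhdsWithin_le_nhds
  · filter_upwards [Ioo_mem_nhdsGT (show (0:ℝ) < 1 by norm_num)] with ε hε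
    rw [Set.uIcc_of_le zero_le_one]
    exact ⟨by linarith [hε.2], by linarith [hε.1]⟩

/-- The principal value of `∫ |z|^{α-1}/(1-z) dz` over `ℝ` equals `π·cot(απ/2)`. -/
theorem pv_integral_cot (α : ℝ) (hα : 0 < α) (hα1 : α < 1) :
    Tendsto (fun ε : ℝ => ∫ z in {z : ℝ | ε < |z - 1|}, |z| ^ (α - 1) / (1 - z))
      (nhdsWithin 0 (Set.Ioi 0))
      (nhds (Real.pi * Real.cot (α * Real.pi / 2))) := by
  obtain ⟨hi, hv⟩ := fold_integral α hα hα1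
  obtain ⟨-, n2, -⟩ := neg_part α hα hα1
  have h := ((((prim _ hi).const_add
    (∫ z in (0:ℝ)..1, (z ^ (α - 1) + z ^ (-α)) / (1 + z))).sub (prim _ n2)).sub (error_tendsto α hα hα1))
  rw [hv, sub_zero, add_sub_cancel_left] at h
  refine h.congr' ?_
  filter_upwards [Ioo_mem_nhdsGT (show (0:ℝ) < 1 by norm_num)] with ε hε
  exact (decomp α hα hα1 ε hε.1 hε.2).symm
end

section
/- Let 0 < α < 1 and define the odd function F : ℝ → ℝ by F(z) = sin(απ/2)·sgn(z)·|z|^α / (1 + 2·cos(απ/2)·|z|^α + |z|^{2α}). Then for every z ∈ ℝ, lim_{ε → 0⁺} (1/π) ∫_{{w : |z − w| > ε}} F(w)/(z − w) dw = −(1 + cos(απ/2)·|z|^α) / (1 + 2·cos(απ/2)·|z|^α + |z|^{2α}); i.e., the (principal-value) Hilbert transform of F is the even function H(F)(z) = −(1 + cos(απ/2)|z|^α)/(1 + 2cos(απ/2)|z|^α + |z|^{2α}). -/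
open MeasureTheory Filter

/-- Holomorphic extension to the upper half plane. -/
noncomputable def clmG (α : ℝ) (z : ℂ) : ℂ := (1 + (-Complex.I * z) ^ (α : ℂ))⁻¹

lemma clm_re_nonneg {α : ℝ} (hα : 0 < α) (hα1 : α < 1) {w : ℂ} (hw : 0 ≤ w.re) :
    0 ≤ (w ^ (α : ℂ)).re := by
  rw [Complex.cpow_ofReal]
  have h := Complex.abs_arg_le_pi_div_two_iff.2 hw
  have : 0 ≤ Real.cos (w.arg * α) := by
    apply Real.cos_nonneg_of_mem_Icc
    have h2 : |w.arg * α| ≤ Real.pi / 2 := by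
      rw [abs_mul, abs_of_pos hα]
      nlinarith [abs_nonneg w.arg]
    exact abs_le.1 h2
  rw [Complex.re_ofReal_mul]
  have e : ((Real.cos (w.arg * α) : ℂ) + (Real.sin (w.arg * α) : ℂ) * Complex.I).re
      = Real.cos (w.arg * α) := by
    simp [-Complex.ofReal_cos, -Complex.ofReal_sin]
  rw [e]
  positivity

lemma clm_one_le {α : ℝ} (hα : 0 < α) (hα1 : α < 1) {w : ℂ} (hw : 0 ≤ w.re) :
    1 ≤ ‖1 + w ^ (α : ℂ)‖ := by
  have h := clm_re_nonneg hα hα1 hw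
  calc (1:ℝ) ≤ (1 + w ^ (α : ℂ)).re := by simp; exact h
    _ ≤ _ := Complex.re_le_norm _

lemma clm_rpow_le {α : ℝ} (hα : 0 < α) (hα1 : α < 1) {w : ℂ} (hw : 0 ≤ w.re) :
    ‖w‖ ^ α ≤ ‖1 + w ^ (α : ℂ)‖ := by
  have h := clm_re_nonneg hα hα1 hw
  rw [← Complex.norm_cpow_real]
  generalize w ^ (α : ℂ) = v at *
  rw [Complex.norm_eq_sqrt_sq_add_sq, Complex.norm_eq_sqrt_sq_add_sq]
  apply Real.sqrt_le_sqrt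
  simp
  nlinarith

lemma clm_w_re (z : ℂ) : (-Complex.I * z).re = z.im := by simp

lemma clmG_norm_le_one {α : ℝ} (hα : 0 < α) (hα1 : α < 1) {z : ℂ} (hz : 0 ≤ z.im) :
    ‖clmG α z‖ ≤ 1 := by
  rw [clmG, norm_inv]
  exact inv_le_one_of_one_le₀ (clm_one_le hα hα1 (by rwa [clm_w_re]))

lemma clmG_norm_le {α : ℝ} (hα : 0 < α) (hα1 : α < 1) (x : ℝ) {z : ℂ} (hz : 0 ≤ z.im)
    (hzx : 0 < ‖z - x‖) :
    ‖clmG α z‖ ≤ (1 + |x| ^ α) * ‖z - x‖ ^ (-α) := by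
  have h1 := clm_one_le hα hα1 (w := -Complex.I * z) (by rwa [clm_w_re])
  have h2 := clm_rpow_le hα hα1 (w := -Complex.I * z) (by rwa [clm_w_re])
  have h3 : ‖z - x‖ ^ α ≤ ‖z‖ ^ α + |x| ^ α := by
    calc ‖z - x‖ ^ α ≤ (‖z‖ + |x|) ^ α := by
          apply Real.rpow_le_rpow (norm_nonneg _) _ hα.le
          simpa using norm_sub_le z (x:ℂ)
      _ ≤ _ := by
          have := NNReal.rpow_add_le_add_rpow ‖z‖₊ ‖x‖₊ hα.le hα1.le
          exact_mod_cast this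
  have h4 : ‖-Complex.I * z‖ = ‖z‖ := by simp
  rw [h4] at h2
  rw [clmG, norm_inv, Real.rpow_neg hzx.le, ← div_eq_mul_inv,
    inv_eq_one_div, div_le_div_iff₀ (by linarith) (by positivity)]
  have : 0 ≤ |x| ^ α := by positivity
  nlinarith

lemma clmG_continuousAt {α : ℝ} (hα : 0 < α) (hα1 : α < 1) {z : ℂ} (hz : 0 ≤ z.im) :
    ContinuousAt (clmG α) z := by
  unfold clmG
  have h1 := clm_one_le hα hα1 (w := -Complex.I * z) (by rwa [clm_w_re])
  apply ContinuousAt.inv₀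
  · apply ContinuousAt.add continuousAt_const
    apply ContinuousAt.comp (f := fun z : ℂ => -Complex.I * z) (g := fun w : ℂ => w ^ (α:ℂ))
    · apply Complex.continuousAt_cpow_const_of_re_pos
      · left; rwa [clm_w_re]
      · simpa
    · fun_prop
  · intro h; rw [h] at h1; simp at h1; linarith

lemma clmG_differentiableAt {α : ℝ} (hα : 0 < α) (hα1 : α < 1) {z : ℂ} (hz : 0 < z.im) :
    DifferentiableAt ℂ (clmG α) z := by
  unfold clmG
  have h1 := clm_one_le hα hα1 (w := -Complex.I * z) (by rw [clm_w_re]; exact hz.le)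
  apply DifferentiableAt.inv
  · apply DifferentiableAt.const_add
    apply DifferentiableAt.cpow_const (by fun_prop)
    left; rwa [clm_w_re]
  · intro h; rw [h] at h1; simp at h1; linarith

lemma clmG_real {α : ℝ} (hα : 0 < α) (hα1 : α < 1) (x : ℝ) :
    (clmG α x).im = Real.sin (α * Real.pi / 2) * Real.sign x * |x| ^ α /
        (1 + 2 * Real.cos (α * Real.pi / 2) * |x| ^ α + |x| ^ (2 * α)) ∧
    (clmG α x).re = (1 + Real.cos (α * Real.pi / 2) * |x| ^ α) /
        (1 + 2 * Real.cos (α * Real.pi / 2) * |x| ^ α + |x| ^ (2 * α)) := by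
  have key : (-Complex.I * x) ^ (α : ℂ) =
      ((|x| ^ α * Real.cos (α * Real.pi / 2) : ℝ) : ℂ)
       - ((|x| ^ α * Real.sin (α * Real.pi / 2) * Real.sign x : ℝ) : ℂ) * Complex.I := by
    rw [Complex.cpow_ofReal]
    have hn : ‖-Complex.I * x‖ = |x| := by simp
    rw [hn]
    rcases lt_trichotomy x 0 with h | h | h
    · have : (-Complex.I * x).arg = Real.pi / 2 := by
        rw [show -Complex.I * (x:ℂ) = ((-x : ℝ) : ℂ) * Complex.I by push_cast; ring,
          Complex.arg_real_mul _ (by linarith), Complex.arg_I]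
      rw [this, Real.sign_of_neg h, show Real.pi / 2 * α = α * Real.pi / 2 by ring]
      push_cast; ring
    · subst h; simp [Real.zero_rpow hα.ne']
    · have : (-Complex.I * x).arg = -(Real.pi / 2) := by
        rw [mul_comm, Complex.arg_real_mul _ h, Complex.arg_neg_I]
      rw [this, Real.sign_of_pos h, show -(Real.pi / 2) * α = -(α * Real.pi / 2) by ring,
        Real.cos_neg, Real.sin_neg]
      push_cast; ring
  have h2 : |x| ^ (2 * α) = |x| ^ α * |x| ^ α * Real.sign x ^ 2 := by
    rcases eq_or_ne x 0 with h | h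
    · subst h; simp [Real.zero_rpow, hα.ne']
    · rcases Real.sign_apply_eq_of_ne_zero x h with h' | h' <;>
      · rw [h', two_mul, Real.rpow_add (abs_pos.2 h)]; ring
  have h3 : |x| ^ α * Real.sign x ^ 2 = |x| ^ α := by
    rcases eq_or_ne x 0 with h | h
    · subst h; simp [Real.zero_rpow hα.ne']
    · rcases Real.sign_apply_eq_of_ne_zero x h with h' | h' <;> · rw [h']; ring
  have h4 := Real.sin_sq_add_cos_sq (α * Real.pi / 2)
  unfold clmG
  rw [key]
  generalize |x| ^ α = r at *
  generalize |x| ^ (2 * α) = r2 at *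
  generalize Real.sin (α * Real.pi / 2) = s at *
  generalize Real.cos (α * Real.pi / 2) = c at *
  generalize Real.sign x = g at *
  have hN : Complex.normSq (1 + (((r * c : ℝ) : ℂ) - ((r * s * g : ℝ) : ℂ) * Complex.I)) =
      1 + 2 * c * r + r2 := by
    rw [Complex.normSq_apply]
    simp only [Complex.add_re, Complex.add_im, Complex.sub_re, Complex.sub_im, Complex.one_re,
      Complex.one_im, Complex.ofReal_re, Complex.ofReal_im, Complex.mul_re, Complex.mul_im,
      Complex.I_re, Complex.I_im]
    have : r2 = r * r := by rw [h2, mul_assoc, h3]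
    rw [this]
    linear_combination (r * s^2) * h3 + r^2 * h4
  rw [Complex.inv_re, Complex.inv_im, hN]
  constructor <;> congr 1 <;> simp <;> ring

lemma clm_pt_im (x r θ : ℝ) : ((x : ℂ) + r * Complex.exp (θ * Complex.I)).im = r * Real.sin θ := by
  rw [Complex.add_im, Complex.ofReal_im, Complex.im_ofReal_mul, Complex.exp_ofReal_mul_I_im, zero_add]

lemma clm_pt_im_nonneg (x : ℝ) {r θ : ℝ} (hr : 0 ≤ r) (hθ : θ ∈ Set.Icc 0 Real.pi) :
    0 ≤ ((x : ℂ) + r * Complex.exp (θ * Complex.I)).im := by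
  rw [clm_pt_im]
  exact mul_nonneg hr (Real.sin_nonneg_of_mem_Icc hθ)

/-- Integral of the extension over a half circle. -/
noncomputable def clmA (α x r : ℝ) : ℂ :=
  ∫ θ in (0:ℝ)..Real.pi, clmG α ((x : ℂ) + r * Complex.exp (θ * Complex.I))

lemma clm_uIoc {θ : ℝ} (h : θ ∈ Set.uIoc 0 Real.pi) : θ ∈ Set.Icc 0 Real.pi := by
  rw [Set.uIoc_of_le Real.pi_pos.le] at h
  exact ⟨h.1.le, h.2⟩

lemma clmA_tendsto_zero {α : ℝ} (hα : 0 < α) (hα1 : α < 1) (x : ℝ) :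
    Tendsto (clmA α x) (nhdsWithin 0 (Set.Ioi 0)) (nhds (Real.pi * clmG α x)) := by
  have e : (Real.pi * clmG α x : ℂ) = ∫ θ in (0:ℝ)..Real.pi, clmG α x := by simp
  rw [e]
  unfold clmA
  have hev : ∀ᶠ r : ℝ in nhdsWithin 0 (Set.Ioi 0), 0 < r := self_mem_nhdsWithin
  apply intervalIntegral.tendsto_integral_filter_of_dominated_convergence (fun _ => 1)
  · filter_upwards [hev] with r hr
    apply ContinuousOn.aestronglyMeasurable _ measurableSet_uIoc
    intro θ hθ
    apply ContinuousAt.continuousWithinAt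
    apply ContinuousAt.comp (g := clmG α)
    · exact clmG_continuousAt hα hα1 (clm_pt_im_nonneg x hr.le (clm_uIoc hθ))
    · fun_prop
  · filter_upwards [hev] with r hr
    refine Eventually.of_forall fun θ hθ => ?_
    exact clmG_norm_le_one hα hα1 (clm_pt_im_nonneg x hr.le (clm_uIoc hθ))
  · simp
  · refine Eventually.of_forall fun θ hθ => ?_
    have h1 : Tendsto (clmG α) (nhds (x:ℂ)) (nhds (clmG α x)) :=
      clmG_continuousAt hα hα1 (by simp)
    apply h1.comp
    have h2 : Continuous (fun r : ℝ => (x : ℂ) + r * Complex.exp (θ * Complex.I)) := by fun_prop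
    have h3 := h2.tendsto 0
    simp only [Complex.ofReal_zero, zero_mul, add_zero] at h3
    exact h3.mono_left nhdsWithin_le_nhds

lemma clmA_tendsto_top {α : ℝ} (hα : 0 < α) (hα1 : α < 1) (x : ℝ) :
    Tendsto (clmA α x) atTop (nhds 0) := by
  have h0 : Tendsto (fun r : ℝ => ((1 + |x| ^ α) * r ^ (-α)) * |Real.pi - 0|) atTop (nhds 0) := by
    have := ((tendsto_rpow_neg_atTop hα).const_mul (1 + |x| ^ α)).mul_const |Real.pi - 0|
    simpa using this
  apply squeeze_zero_norm' _ h0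
  filter_upwards [eventually_gt_atTop 0] with r hr
  apply intervalIntegral.norm_integral_le_of_norm_le_const
  intro θ hθ
  have hn : ‖((x : ℂ) + r * Complex.exp (θ * Complex.I)) - x‖ = r := by
    rw [add_sub_cancel_left, norm_mul, Complex.norm_exp_ofReal_mul_I, Complex.norm_real,
      Real.norm_of_nonneg hr.le, mul_one]
  have := clmG_norm_le hα hα1 x (clm_pt_im_nonneg x hr.le (clm_uIoc hθ)) (by rw [hn]; exact hr)
  rwa [hn] at this

lemma clm_contour {α : ℝ} (hα : 0 < α) (hα1 : α < 1) (x : ℝ) {a b : ℝ} (hab : a ≤ b) :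
    (∫ t in a..b, clmG α ((x + Real.exp t : ℝ) : ℂ)) - (∫ t in a..b, clmG α ((x - Real.exp t : ℝ) : ℂ))
      + Complex.I * clmA α x (Real.exp b) - Complex.I * clmA α x (Real.exp a) = 0 := by
  have hexp : ∀ w : ℂ, ((x:ℂ) + Complex.exp w).im = Real.exp w.re * Real.sin w.im := by
    intro w; rw [Complex.add_im, Complex.exp_im]; simp
  have h := Complex.integral_boundary_rect_eq_zero_of_continuousOn_of_differentiableOn
    (fun w => clmG α (x + Complex.exp w)) (⟨a, 0⟩ : ℂ) (⟨b, Real.pi⟩ : ℂ) ?_ ?_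
  · simp only [smul_eq_mul] at h
    unfold clmA
    have g1 : ∀ t : ℝ, (x : ℂ) + Complex.exp (t + (0 : ℝ) * Complex.I) =
        ((x + Real.exp t : ℝ) : ℂ) := by
      intro t; simp
    have g2 : ∀ t : ℝ, (x : ℂ) + Complex.exp (t + Real.pi * Complex.I) =
        ((x - Real.exp t : ℝ) : ℂ) := by
      intro t; rw [Complex.exp_add, Complex.exp_pi_mul_I]; push_cast; ring
    have g3 : ∀ r t : ℝ, Complex.exp (r + t * Complex.I) =
        (Real.exp r : ℂ) * Complex.exp (t * Complex.I) := by
      intro r t; rw [Complex.exp_add]; push_cast; ring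
    simp only [g1, g2] at h
    simp only [g3] at h
    exact h
  · intro w hw
    have hw2 := hw.2
    simp only [Set.mem_preimage, Set.uIcc_of_le Real.pi_pos.le] at hw2
    apply ContinuousAt.continuousWithinAt
    apply ContinuousAt.comp (g := clmG α)
    · apply clmG_continuousAt hα hα1
      rw [hexp]
      exact mul_nonneg (Real.exp_pos _).le (Real.sin_nonneg_of_mem_Icc hw2)
    · fun_prop
  · intro w hw
    have hw2 := hw.2
    simp only [Set.mem_preimage, min_eq_left Real.pi_pos.le, max_eq_right Real.pi_pos.le] at hw2
    apply DifferentiableAt.differentiableWithinAt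
    apply DifferentiableAt.comp (g := clmG α)
    · apply clmG_differentiableAt hα hα1
      rw [hexp]
      exact mul_pos (Real.exp_pos _) (Real.sin_pos_of_mem_Ioo hw2)
    · fun_prop

/-- The boundary imaginary part. -/
noncomputable def clmF (α : ℝ) (y : ℝ) : ℝ := (clmG α y).im

lemma clmF_continuous {α : ℝ} (hα : 0 < α) (hα1 : α < 1) : Continuous (clmF α) := by
  unfold clmF
  refine Complex.continuous_im.comp (continuous_iff_continuousAt.2 fun y => ?_)
  apply ContinuousAt.comp (g := clmG α)
  · exact clmG_continuousAt hα hα1 (by simp)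
  · fun_prop

lemma clmG_real_continuous {α : ℝ} (hα : 0 < α) (hα1 : α < 1) :
    Continuous (fun y : ℝ => clmG α y) := by
  refine (continuous_iff_continuousAt.2 fun y => ?_)
  apply ContinuousAt.comp (g := clmG α)
  · exact clmG_continuousAt hα hα1 (by simp)
  · fun_prop

lemma clm_contour_im {α : ℝ} (hα : 0 < α) (hα1 : α < 1) (x : ℝ) {a b : ℝ} (hab : a ≤ b) :
    (∫ t in a..b, clmF α (x + Real.exp t)) - (∫ t in a..b, clmF α (x - Real.exp t))
      = (clmA α x (Real.exp a)).re - (clmA α x (Real.exp b)).re := by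
  have h := congrArg Complex.im (clm_contour hα hα1 x hab)
  have hc := clmG_real_continuous hα hα1
  have e1 : (∫ t in a..b, clmG α ((x + Real.exp t : ℝ) : ℂ)).im =
      ∫ t in a..b, clmF α (x + Real.exp t) :=
    ((Complex.imCLM.intervalIntegral_comp_comm
      ((hc.comp (by fun_prop : Continuous fun t : ℝ => x + Real.exp t)).intervalIntegrable a b))).symm
  have e2 : (∫ t in a..b, clmG α ((x - Real.exp t : ℝ) : ℂ)).im =
      ∫ t in a..b, clmF α (x - Real.exp t) :=
    ((Complex.imCLM.intervalIntegral_comp_comm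
      ((hc.comp (by fun_prop : Continuous fun t : ℝ => x - Real.exp t)).intervalIntegrable a b))).symm
  simp only [Complex.add_im, Complex.sub_im, Complex.I_mul_im, e1, e2, Complex.zero_im] at h
  linarith

lemma clm_subst {α : ℝ} (hα : 0 < α) (hα1 : α < 1) (x : ℝ) {ε R : ℝ} (hε : 0 < ε) (hR : ε ≤ R) :
    (∫ y in (x + ε)..(x + R), clmF α y / (x - y)) + (∫ y in (x - R)..(x - ε), clmF α y / (x - y))
      = (clmA α x R).re - (clmA α x ε).re := by
  have hR0 : 0 < R := hε.trans_le hR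
  have hF := clmF_continuous hα hα1
  have h := clm_contour_im hα hα1 x (Real.log_le_log hε hR)
  have e1 := intervalIntegral.integral_comp_mul_deriv' (a := Real.log ε) (b := Real.log R)
    (f := fun t => x + Real.exp t) (f' := Real.exp) (g := fun y => clmF α y / (x - y))
    (fun t _ => (Real.hasDerivAt_exp t).const_add x) (by fun_prop) (by
      rintro _ ⟨t, -, rfl⟩
      apply ContinuousAt.continuousWithinAt
      apply hF.continuousAt.div (by fun_prop)
      simp)
  have e2 := intervalIntegral.integral_comp_mul_deriv' (a := Real.log ε) (b := Real.log R)
    (f := fun t => x - Real.exp t) (f' := fun t => -Real.exp t) (g := fun y => clmF α y / (x - y))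
    (fun t _ => (Real.hasDerivAt_exp t).const_sub x) (by fun_prop) (by
      rintro _ ⟨t, -, rfl⟩
      apply ContinuousAt.continuousWithinAt
      apply hF.continuousAt.div (by fun_prop)
      simp)
  simp only [Real.exp_log hε, Real.exp_log hR0, Function.comp_def] at e1 e2 h
  rw [intervalIntegral.integral_symm (x - ε) (x - R), ← e1, ← e2]
  have f1 : ∀ t, clmF α (x + Real.exp t) / (x - (x + Real.exp t)) * Real.exp t
      = - clmF α (x + Real.exp t) := by
    intro t
    have := (Real.exp_pos t).ne'
    rw [show x - (x + Real.exp t) = - Real.exp t by ring]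
    field_simp
  have f2 : ∀ t, clmF α (x - Real.exp t) / (x - (x - Real.exp t)) * -Real.exp t
      = - clmF α (x - Real.exp t) := by
    intro t
    have := (Real.exp_pos t).ne'
    rw [show x - (x - Real.exp t) = Real.exp t by ring]
    field_simp
  simp only [f1, f2, intervalIntegral.integral_neg]
  linarith

lemma clm_set (x ε : ℝ) (hε : 0 < ε) :
    {y : ℝ | ε < |x - y|} = Set.Ioi (x + ε) ∪ Set.Iio (x - ε) := by
  ext y
  simp only [Set.mem_ofPred_eq, lt_abs, Set.mem_union, Set.mem_Ioi, Set.mem_Iio]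
  constructor
  · rintro (h | h)
    · right; linarith
    · left; linarith
  · rintro (h | h)
    · right; linarith
    · left; linarith

lemma clm_bound_integrable {α : ℝ} (hα : 0 < α) (x : ℝ) {ε : ℝ} (hε : 0 < ε) :
    IntegrableOn (fun y : ℝ => |x - y| ^ (-α - 1)) {y : ℝ | ε < |x - y|} := by
  rw [clm_set x ε hε]
  have hpos : ∀ m : ℝ, IntegrableOn (fun y : ℝ => |m - y| ^ (-α - 1)) (Set.Ioi (m + ε)) := by
    intro m
    have := integrableOn_add_rpow_Ioi_of_lt (a := -α - 1) (c := m + ε) (m := -m)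
      (by linarith) (by linarith)
    refine this.congr_fun (fun y hy => ?_) measurableSet_Ioi
    have hy : m + ε < y := hy
    simp only
    rw [abs_sub_comm, abs_of_pos (by linarith), ← sub_eq_add_neg]
  apply IntegrableOn.union (hpos x)
  rw [← (Measure.measurePreserving_neg (volume : Measure ℝ)).integrableOn_comp_preimage
      (Homeomorph.neg ℝ).measurableEmbedding]
  have := hpos (-x)
  simp only [Function.comp_def, Set.neg_preimage, Set.neg_Iio]
  rw [show -(x - ε) = -x + ε by ring]
  refine this.congr_fun (fun y hy => ?_) measurableSet_Ioi
  simp only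
  rw [show -x - y = -(x - -y) by ring, abs_neg]

lemma clm_integrable {α : ℝ} (hα : 0 < α) (hα1 : α < 1) (x : ℝ) {ε : ℝ} (hε : 0 < ε) :
    IntegrableOn (fun y : ℝ => clmF α y / (x - y)) {y : ℝ | ε < |x - y|} := by
  have hF := clmF_continuous hα hα1
  have hm : MeasurableSet {y : ℝ | ε < |x - y|} := by
    rw [clm_set x ε hε]; exact measurableSet_Ioi.union measurableSet_Iio
  refine Integrable.mono' ((clm_bound_integrable hα x hε).const_mul (1 + |x| ^ α)) ?_ ?_
  · exact (hF.measurable.div (measurable_const.sub measurable_id)).aestronglyMeasurable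
  · refine (ae_restrict_iff' hm).2 (Eventually.of_forall fun y hy => ?_)
    have hy : ε < |x - y| := hy
    have hp : 0 < |x - y| := hε.trans hy
    have hn : ‖(y:ℂ) - x‖ = |x - y| := by
      rw [← Complex.ofReal_sub, Complex.norm_real, Real.norm_eq_abs, abs_sub_comm]
    have h1 := clmG_norm_le hα hα1 x (z := y) (by simp) (by rw [hn]; exact hp)
    rw [hn] at h1
    rw [norm_div, Real.norm_eq_abs, Real.norm_eq_abs, div_le_iff₀ hp, mul_assoc,
      Real.rpow_sub_one hp.ne', div_mul_cancel₀ _ hp.ne']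
    exact (Complex.abs_im_le_norm _).trans h1

lemma clm_trunc {α : ℝ} (hα : 0 < α) (hα1 : α < 1) (x : ℝ) {ε : ℝ} (hε : 0 < ε) :
    ∫ y in {y : ℝ | ε < |x - y|}, clmF α y / (x - y) = -(clmA α x ε).re := by
  have hi := clm_integrable hα hα1 x hε
  rw [clm_set x ε hε] at hi ⊢
  have hi1 := hi.left_of_union
  have hi2 := hi.right_of_union
  rw [setIntegral_union _ measurableSet_Iio hi1 hi2]
  · rw [← integral_Iic_eq_integral_Iio]
    have t1 := intervalIntegral_tendsto_integral_Ioi (x + ε) hi1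
      (tendsto_atTop_add_const_left atTop x tendsto_id)
    have t2 := intervalIntegral_tendsto_integral_Iic (x - ε)
      ((integrableOn_Iic_iff_integrableOn_Iio).2 hi2)
      (tendsto_atBot_add_const_left atTop x tendsto_neg_atTop_atBot)
    have t3 := t1.add t2
    have t4 : Tendsto (fun R => (clmA α x R).re - (clmA α x ε).re) atTop
        (nhds ((0:ℂ).re - (clmA α x ε).re)) :=
      ((Complex.continuous_re.tendsto _).comp (clmA_tendsto_top hα hα1 x)).sub_const _
    have t5 := tendsto_nhds_unique (t3.congr' ?_) t4
    · rw [t5]; simp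
    · filter_upwards [eventually_ge_atTop ε] with R hR
      simpa [sub_eq_add_neg] using clm_subst hα hα1 x hε hR
  · rw [Set.disjoint_left]
    intro y hy hy'
    have h1 : x + ε < y := hy
    have h2 : y < x - ε := hy'
    linarith

/-- The Hilbert transform of the `C^α` self-similar CLM profile. -/
theorem hilbert_of_holder_CLM_profile (α : ℝ) (hα : 0 < α) (hα1 : α < 1) :
    IsPVHilbert
      (fun z : ℝ => Real.sin (α * Real.pi / 2) * Real.sign z * |z| ^ α /
        (1 + 2 * Real.cos (α * Real.pi / 2) * |z| ^ α + |z| ^ (2 * α)))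
      (fun z : ℝ => -(1 + Real.cos (α * Real.pi / 2) * |z| ^ α) /
        (1 + 2 * Real.cos (α * Real.pi / 2) * |z| ^ α + |z| ^ (2 * α))) := by
  intro x
  simp only [neg_div]
  simp only [← (clmG_real hα hα1 _).1, ← (clmG_real hα hα1 _).2]
  have t := ((Complex.continuous_re.tendsto _).comp (clmA_tendsto_zero hα hα1 x)).neg.const_mul
    (Real.pi)⁻¹
  have e : (Real.pi)⁻¹ * -((Real.pi * clmG α x : ℂ)).re = -(clmG α x).re := by
    rw [Complex.re_ofReal_mul]
    field_simp
  rw [e] at t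
  refine t.congr' ?_
  filter_upwards [self_mem_nhdsWithin] with ε hε
  have h := clm_trunc hα hα1 x (ε := ε) hε
  unfold clmF at h
  rw [h]; rfl
end

section
/- (Tricomi identity.) Let f, g : ℝ → ℝ be Schwartz functions and let Hf, Hg, H(fg), and H(Hf·Hg) denote the (principal-value) Hilbert transforms of f, g, f·g, and Hf·Hg respectively (all of which exist pointwise). Then for every x ∈ ℝ: H(fg)(x) = Hf(x)·g(x) + f(x)·Hg(x) + H(Hf·Hg)(x). -/
open MeasureTheory Filter

lemma approx_id (u k : ℝ → ℝ) (hu : Continuous u) (M : ℝ) (hM : ∀ y, |u y| ≤ M)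
    (hk : Integrable k) (x : ℝ) :
    Tendsto (fun t : ℝ => ∫ y, u y * (t⁻¹ * k ((x - y) / t))) (nhdsWithin 0 (Set.Ioi 0))
      (nhds (u x * ∫ s, k s)) := by
  have h1 : ∀ t : ℝ, 0 < t →
      ∫ y, u y * (t⁻¹ * k ((x - y) / t)) = ∫ s, u (x - t * s) * k s := by
    intro t ht
    rw [← integral_sub_left_eq_self (fun y => u y * (t⁻¹ * k ((x - y) / t))) volume x]
    have := Measure.integral_comp_mul_left
      (fun y => u (x - y) * (t⁻¹ * k ((x - (x - y)) / t))) t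
    have h2 : ∫ s, u (x - t * s) * (t⁻¹ * k ((x - (x - t * s)) / t))
        = t⁻¹ * ∫ s, u (x - t * s) * k s := by
      rw [← integral_const_mul]
      congr 1
      ext s
      have : (x - (x - t * s)) / t = s := by field_simp; ring
      rw [this]; ring
    rw [h2, abs_of_pos (inv_pos.2 ht), smul_eq_mul] at this
    exact (mul_left_cancel₀ (inv_pos.2 ht).ne' this).symm
  have h2 : Tendsto (fun t : ℝ => ∫ s, u (x - t * s) * k s) (nhdsWithin 0 (Set.Ioi 0))
      (nhds (∫ s, u x * k s)) := by
    apply tendsto_integral_filter_of_dominated_convergence (fun s => M * ‖k s‖)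
    · filter_upwards with t
      exact (by fun_prop : Continuous fun s => u (x - t * s)).aestronglyMeasurable.mul
        hk.aestronglyMeasurable
    · filter_upwards with t
      filter_upwards with s
      rw [norm_mul]
      exact mul_le_mul_of_nonneg_right (hM _) (norm_nonneg _)
    · exact hk.norm.const_mul M
    · filter_upwards with s
      have : Continuous fun t : ℝ => u (x - t * s) * k s := by fun_prop
      have := (this.tendsto 0).mono_left (nhdsWithin_le_nhds (s := Set.Ioi (0:ℝ)))
      simpa using this
  rw [integral_const_mul] at h2
  refine h2.congr' ?_
  filter_upwards [self_mem_nhdsWithin] with t ht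
  exact (h1 t ht).symm

lemma poisson_lim (u : ℝ → ℝ) (hu : Continuous u) (M : ℝ) (hM : ∀ y, |u y| ≤ M) (x : ℝ) :
    Tendsto (fun t : ℝ => ∫ y, u y * (t / ((x - y) ^ 2 + t ^ 2))) (nhdsWithin 0 (Set.Ioi 0))
      (nhds (Real.pi * u x)) := by
  have := approx_id u _ hu M hM integrable_inv_one_add_sq x
  rw [integral_univ_inv_one_add_sq, mul_comm] at this
  refine this.congr' ?_
  filter_upwards [self_mem_nhdsWithin] with t ht
  have ht : 0 < t := ht
  congr 1; ext y; congr 1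
  have : (x - y) ^ 2 + t ^ 2 ≠ 0 := by positivity
  have : 1 + ((x - y) / t) ^ 2 ≠ 0 := by positivity
  field_simp
  ring

noncomputable def kk (s : ℝ) : ℝ := s / (s ^ 2 + 1) - {s : ℝ | 1 < |s|}.indicator (fun s => s⁻¹) s

lemma measurableSet_far (x ε : ℝ) : MeasurableSet {y : ℝ | ε < |x - y|} :=
  (isOpen_lt continuous_const (by fun_prop)).measurableSet

lemma kk_integrable : Integrable kk := by
  have hm : Measurable kk := by
    unfold kk
    refine Measurable.sub (by fun_prop) (Measurable.indicator (by fun_prop) ?_)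
    exact (isOpen_lt continuous_const (by fun_prop)).measurableSet
  refine integrable_inv_one_add_sq.mono hm.aestronglyMeasurable ?_
  filter_upwards with s
  rw [Real.norm_eq_abs, Real.norm_eq_abs, abs_of_pos (by positivity : 0 < (1 + s^2)⁻¹)]
  unfold kk
  by_cases h : 1 < |s|
  · rw [Set.indicator_of_mem (by exact h)]
    have hs : s ≠ 0 := by rintro rfl; simp at h; linarith
    have : s / (s ^ 2 + 1) - s⁻¹ = - (s⁻¹ * (1 + s ^ 2)⁻¹) := by
      have : s ^ 2 + 1 ≠ 0 := by positivity
      have : 1 + s ^ 2 ≠ 0 := by positivity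
      field_simp; ring
    rw [this, abs_neg, abs_mul, abs_of_pos (by positivity : 0 < (1 + s^2)⁻¹), abs_inv]
    apply mul_le_of_le_one_left (by positivity)
    exact inv_le_one_of_one_le₀ h.le
  · rw [Set.indicator_of_notMem (by exact h), sub_zero, abs_div,
      abs_of_pos (by positivity : 0 < s^2 + 1), add_comm, div_eq_mul_inv]
    exact mul_le_of_le_one_left (by positivity) (not_lt.1 h)

lemma kk_integral : ∫ s, kk s = 0 := by
  have h : ∀ s, kk (-s) = - kk s := by
    intro s
    unfold kk
    by_cases h : 1 < |s|
    · rw [Set.indicator_of_mem (by simpa using h), Set.indicator_of_mem (by exact h), inv_neg]; ring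
    · rw [Set.indicator_of_notMem (by simpa using h), Set.indicator_of_notMem (by exact h)]; ring
  have := integral_neg_eq_self kk volume
  simp_rw [h, integral_neg] at this
  linarith

lemma bdd_inv (a t : ℝ) (ht : 0 < t) : |a / (a ^ 2 + t ^ 2)| ≤ t⁻¹ := by
  rw [abs_div, abs_of_pos (by positivity : 0 < a ^ 2 + t ^ 2), div_le_iff₀ (by positivity),
    ← sq_abs a]
  have : t⁻¹ * (|a| ^ 2 + t ^ 2) - |a| = t⁻¹ * ((|a| - t/2)^2 + 3/4 * t^2) := by field_simp; ring
  have : 0 ≤ t⁻¹ * ((|a| - t/2)^2 + 3/4 * t^2) := by positivity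
  linarith

lemma int_conj (u : ℝ → ℝ) (hi : Integrable u) (x t : ℝ) (ht : 0 < t) :
    Integrable (fun y => u y * ((x - y) / ((x - y) ^ 2 + t ^ 2))) := by
  refine hi.mul_bdd (c := t⁻¹) (Measurable.aestronglyMeasurable (by fun_prop)) ?_
  filter_upwards with y
  exact bdd_inv _ _ ht

lemma int_far (u : ℝ → ℝ) (hi : Integrable u) (x t : ℝ) (ht : 0 < t) :
    IntegrableOn (fun y => u y / (x - y)) {y : ℝ | t < |x - y|} := by
  simp_rw [div_eq_mul_inv]
  refine (hi.integrableOn).mul_bdd (c := t⁻¹) (Measurable.aestronglyMeasurable (by fun_prop)) ?_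
  refine (ae_restrict_iff' (measurableSet_far x t)).2 ?_
  filter_upwards with y hy
  rw [norm_inv]
  exact inv_anti₀ ht (le_of_lt hy)

lemma conj_lim (u : ℝ → ℝ) (hu : Continuous u) (hi : Integrable u) (M : ℝ) (hM : ∀ y, |u y| ≤ M)
    (x h : ℝ) (hp : Tendsto
    (fun ε : ℝ => (Real.pi)⁻¹ * ∫ y in {y : ℝ | ε < |x - y|}, u y / (x - y))
    (nhdsWithin 0 (Set.Ioi 0)) (nhds h)) :
    Tendsto (fun t : ℝ => ∫ y, u y * ((x - y) / ((x - y) ^ 2 + t ^ 2)))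
      (nhdsWithin 0 (Set.Ioi 0)) (nhds (Real.pi * h)) := by
  have h1 := approx_id u _ hu M hM kk_integrable x
  rw [kk_integral, mul_zero] at h1
  have h2 := h1.add (hp.const_mul Real.pi)
  rw [zero_add] at h2
  refine h2.congr' ?_
  filter_upwards [self_mem_nhdsWithin] with t ht
  have ht : 0 < t := ht
  rw [mul_inv_cancel_left₀ Real.pi_ne_zero, ← integral_indicator (measurableSet_far x t)]
  have e : ∀ y, u y * (t⁻¹ * kk ((x - y) / t)) = u y * ((x - y) / ((x - y) ^ 2 + t ^ 2))
      - {y : ℝ | t < |x - y|}.indicator (fun y => u y / (x - y)) y := by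
    intro y
    unfold kk
    have e1 : t⁻¹ * ((x - y) / t / (((x - y) / t) ^ 2 + 1)) = (x - y) / ((x - y) ^ 2 + t ^ 2) := by
      have : (x - y) ^ 2 + t ^ 2 ≠ 0 := by positivity
      have : ((x - y) / t) ^ 2 + 1 ≠ 0 := by positivity
      field_simp
    have e3 : 1 < |(x - y) / t| ↔ t < |x - y| := by
      rw [abs_div, abs_of_pos ht, one_lt_div ht]
    by_cases hy : t < |x - y|
    · rw [Set.indicator_of_mem (by exact e3.2 hy), Set.indicator_of_mem (by exact hy), mul_sub, e1,
        inv_div]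
      field_simp
    · rw [Set.indicator_of_notMem (by exact fun h => hy (e3.1 h)),
        Set.indicator_of_notMem (by exact hy), sub_zero, e1, sub_zero]
  simp_rw [e]
  rw [integral_sub (int_conj u hi x t ht)
    ((integrable_indicator_iff (measurableSet_far x t)).2 (int_far u hi x t ht)), sub_add_cancel]

lemma ker_im (y s t : ℝ) : ((y : ℂ) - s + t * Complex.I).im = t := by simp
lemma ker_re (y s t : ℝ) : ((y : ℂ) - s + t * Complex.I).re = y - s := by simp

lemma ker_norm (y s t : ℝ) (ht : 0 < t) : t ≤ ‖(y : ℂ) - s + t * Complex.I‖ := by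
  have := Complex.abs_im_le_norm ((y : ℂ) - s + t * Complex.I)
  rw [ker_im, abs_of_pos ht] at this
  exact this

lemma ker_ne (y s t : ℝ) (ht : 0 < t) : (y : ℂ) - s + t * Complex.I ≠ 0 :=
  norm_pos_iff.1 (ht.trans_le (ker_norm y s t ht))

lemma ker_inv_norm (y s t : ℝ) (ht : 0 < t) : ‖((y : ℂ) - s + t * Complex.I)⁻¹‖ ≤ t⁻¹ := by
  rw [norm_inv]
  exact inv_anti₀ ht (ker_norm y s t ht)

lemma ker_cont (s t : ℝ) (ht : 0 < t) :
    Continuous fun y : ℝ => ((y : ℂ) - s + t * Complex.I)⁻¹ :=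
  Continuous.inv₀ (by fun_prop) fun y => ker_ne y s t ht

lemma ker_cont' (t : ℝ) (ht : 0 < t) :
    Continuous fun p : ℝ × ℝ => ((p.1 : ℂ) - p.2 + t * Complex.I)⁻¹ :=
  Continuous.inv₀ (by fun_prop) fun p => ker_ne p.1 p.2 t ht

/-- decay of the kernel -/
lemma ker_decay (s t : ℝ) (ht : 0 < t) : ∃ C, ∀ y : ℝ,
    ‖((y : ℂ) - s + t * Complex.I)⁻¹‖ * (1 + |y|) ≤ C := by
  refine ⟨1 + t⁻¹ * (1 + |s|), fun y => ?_⟩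
  have h1 : |y| ≤ ‖(y : ℂ) - s + t * Complex.I‖ + |s| := by
    have := Complex.abs_re_le_norm ((y : ℂ) - s + t * Complex.I)
    rw [ker_re] at this
    have := abs_sub_abs_le_abs_sub y s
    linarith
  have h2 := ker_inv_norm y s t ht
  have h3 : ‖((y : ℂ) - s + t * Complex.I)⁻¹‖ * ‖(y : ℂ) - s + t * Complex.I‖ = 1 := by
    rw [← norm_mul, inv_mul_cancel₀ (ker_ne y s t ht), norm_one]
  have h4 := norm_nonneg ((y : ℂ) - s + t * Complex.I)⁻¹
  set n := ‖((y : ℂ) - s + t * Complex.I)⁻¹‖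
  calc n * (1 + |y|) ≤ n * (1 + (‖(y : ℂ) - s + t * Complex.I‖ + |s|)) := by gcongr
    _ = 1 + n * (1 + |s|) := by linear_combination h3
    _ ≤ _ := by gcongr

/-- integrability criterion -/
lemma integrable_of_decay {E : Type*} [NormedAddCommGroup E] (F : ℝ → E) (hF : Continuous F) (C : ℝ)
    (h : ∀ y, ‖F y‖ * ((1 + |y|) * (1 + |y|)) ≤ C) : Integrable F := by
  refine (integrable_inv_one_add_sq.const_mul C).mono' hF.aestronglyMeasurable ?_
  filter_upwards with y
  have h1 := h y
  rw [← div_eq_mul_inv, le_div_iff₀ (by positivity)]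
  refine le_trans ?_ h1
  gcongr
  nlinarith [abs_nonneg y, sq_abs y]

lemma log_lim_top (p : ℂ) : Tendsto (fun y : ℝ => Complex.log (-Complex.I * (y - p)) - Real.log y)
    atTop (nhds (Complex.log (-Complex.I))) := by
  have h0 : Tendsto (fun y : ℝ => -Complex.I * (1 - p * ((y⁻¹ : ℝ) : ℂ))) atTop
      (nhds (-Complex.I)) := by
    have := (Complex.continuous_ofReal.tendsto 0).comp tendsto_inv_atTop_zero
    have := ((this.const_mul p).const_sub 1).const_mul (-Complex.I)
    simpa using this
  have hs : -Complex.I ∈ Complex.slitPlane := by simp [Complex.mem_slitPlane_iff]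
  have h1 := (continuousAt_clog hs).tendsto.comp h0
  refine h1.congr' ?_
  filter_upwards [eventually_gt_atTop 0, h0.eventually_ne (by simp : -Complex.I ≠ 0)] with y hy hne
  have : -Complex.I * (y - p) = (y : ℂ) * (-Complex.I * (1 - p * ((y⁻¹ : ℝ) : ℂ))) := by
    have : (y : ℂ) ≠ 0 := by exact_mod_cast hy.ne'
    push_cast; field_simp
  rw [this, Complex.log_ofReal_mul hy hne]
  simp

lemma log_lim_bot (p : ℂ) : Tendsto
    (fun y : ℝ => Complex.log (-Complex.I * (y - p)) - Real.log (-y))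
    atBot (nhds (Complex.log (Complex.I))) := by
  have h0 : Tendsto (fun y : ℝ => Complex.I * (1 - p * ((y⁻¹ : ℝ) : ℂ))) atBot
      (nhds (Complex.I)) := by
    have := (Complex.continuous_ofReal.tendsto 0).comp tendsto_inv_atBot_zero
    have := ((this.const_mul p).const_sub 1).const_mul (Complex.I)
    simpa using this
  have hs : Complex.I ∈ Complex.slitPlane := by simp [Complex.mem_slitPlane_iff]
  have h1 := (continuousAt_clog hs).tendsto.comp h0
  refine h1.congr' ?_
  filter_upwards [eventually_lt_atBot 0, h0.eventually_ne (by simp : Complex.I ≠ 0)] with y hy hne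
  have : -Complex.I * (y - p) = ((-y : ℝ) : ℂ) * (Complex.I * (1 - p * ((y⁻¹ : ℝ) : ℂ))) := by
    have : (y : ℂ) ≠ 0 := by exact_mod_cast hy.ne
    push_cast; field_simp
  rw [this, Complex.log_ofReal_mul (by linarith) hne]
  simp

/-- two poles in the lower half plane -/
lemma two_poles_int (s t r τ : ℝ) (ht : 0 < t) (hτ : 0 < τ) :
    Integrable (fun y : ℝ => ((y : ℂ) - s + t * Complex.I)⁻¹ * ((y : ℂ) - r + τ * Complex.I)⁻¹) := by
  obtain ⟨C, hC⟩ := ker_decay s t ht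
  obtain ⟨D, hD⟩ := ker_decay r τ hτ
  refine integrable_of_decay _ ((ker_cont s t ht).mul (ker_cont r τ hτ)) (C * D) fun y => ?_
  rw [norm_mul, mul_mul_mul_comm]
  have : 0 ≤ ‖((y : ℂ) - s + t * Complex.I)⁻¹‖ * (1 + |y|) := by positivity
  exact mul_le_mul (hC y) (hD y) (by positivity) (this.trans (hC y))

lemma two_poles (s t r τ : ℝ) (ht : 0 < t) (hτ : 0 < τ) (hne : t ≠ τ) :
    ∫ y : ℝ, ((y : ℂ) - s + t * Complex.I)⁻¹ * ((y : ℂ) - r + τ * Complex.I)⁻¹ = 0 := by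
  set p : ℂ := s - t * Complex.I with hp
  set q : ℂ := r - τ * Complex.I with hq
  have hpq : p - q ≠ 0 := by
    intro h
    apply hne
    have := congrArg Complex.im h
    simp [hp, hq] at this
    linarith
  have ed : ∀ (a b y : ℝ), 0 < b → HasDerivAt
      (fun y : ℝ => Complex.log (-Complex.I * (y - (a - b * Complex.I))))
      (((y : ℂ) - a + b * Complex.I)⁻¹) y := by
    intro a b y hb
    have h1 : HasDerivAt (fun y : ℝ => -Complex.I * ((y : ℂ) - (a - b * Complex.I)))
        (-Complex.I * 1) y :=
      ((Complex.ofRealCLM.hasDerivAt (x := y)).sub_const _).const_mul _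
    have h2 := h1.clog_real (Or.inl (by simp [hb]))
    convert h2 using 1
    have := ker_ne y a b hb
    have h3 : (y : ℂ) - (a - b * Complex.I) ≠ 0 := by
      convert this using 1; ring
    field_simp
    ring
  have hd : ∀ y : ℝ, HasDerivAt (fun y : ℝ => (p - q)⁻¹ * (Complex.log (-Complex.I * (y - p))
      - Complex.log (-Complex.I * (y - q))))
      (((y : ℂ) - s + t * Complex.I)⁻¹ * ((y : ℂ) - r + τ * Complex.I)⁻¹) y := by
    intro y
    have := ((ed s t y ht).fun_sub (ed r τ y hτ)).const_mul (p - q)⁻¹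
    refine this.congr_deriv ?_
    have h1 := ker_ne y s t ht
    have h2 := ker_ne y r τ hτ
    have h3 : (y : ℂ) - r + τ * Complex.I - (y - s + t * Complex.I) = p - q := by
      rw [hp, hq]; ring
    rw [inv_sub_inv h1 h2, h3]
    field_simp
  have ht1 : Tendsto (fun y : ℝ => (p - q)⁻¹ * (Complex.log (-Complex.I * (y - p))
      - Complex.log (-Complex.I * (y - q)))) atTop (nhds 0) := by
    have := ((log_lim_top p).sub (log_lim_top q)).const_mul (p - q)⁻¹
    simpa using this
  have hb1 : Tendsto (fun y : ℝ => (p - q)⁻¹ * (Complex.log (-Complex.I * (y - p))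
      - Complex.log (-Complex.I * (y - q)))) atBot (nhds 0) := by
    have := ((log_lim_bot p).sub (log_lim_bot q)).const_mul (p - q)⁻¹
    simpa using this
  rw [integral_of_hasDerivAt_of_tendsto hd (two_poles_int s t r τ ht hτ) hb1 ht1, sub_zero]

lemma three_poles (s t r τ x σ : ℝ) (ht : 0 < t) (hτ : 0 < τ) (hσ : 0 < σ) (h1 : t ≠ τ)
    (h2 : t ≠ σ) (h3 : τ ≠ σ) :
    ∫ y : ℝ, (((y : ℂ) - x + σ * Complex.I)⁻¹ * ((y : ℂ) - s + t * Complex.I)⁻¹) *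
      ((y : ℂ) - r + τ * Complex.I)⁻¹ = 0 := by
  have hpq : ((s : ℂ) - t * Complex.I) - (r - τ * Complex.I) ≠ 0 := by
    intro h
    apply h1
    have := congrArg Complex.im h
    simp at this
    linarith
  have e : ∀ y : ℝ, (((y : ℂ) - x + σ * Complex.I)⁻¹ * ((y : ℂ) - s + t * Complex.I)⁻¹) *
      ((y : ℂ) - r + τ * Complex.I)⁻¹ = (((s : ℂ) - t * Complex.I) - (r - τ * Complex.I))⁻¹ *
      (((y : ℂ) - s + t * Complex.I)⁻¹ * ((y : ℂ) - x + σ * Complex.I)⁻¹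
      - ((y : ℂ) - r + τ * Complex.I)⁻¹ * ((y : ℂ) - x + σ * Complex.I)⁻¹) := by
    intro y
    have h1 := ker_ne y s t ht
    have h2 := ker_ne y r τ hτ
    have h3 : (y : ℂ) - r + τ * Complex.I - (y - s + t * Complex.I)
      = ((s : ℂ) - t * Complex.I) - (r - τ * Complex.I) := by ring
    rw [← sub_mul, inv_sub_inv h1 h2, h3]
    generalize ((s : ℂ) - t * Complex.I) - (r - τ * Complex.I) = A at *
    generalize (y : ℂ) - r + τ * Complex.I = B at *
    generalize (y : ℂ) - s + t * Complex.I = D at *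
    field_simp
  simp_rw [e]
  rw [integral_const_mul, integral_sub (two_poles_int s t x σ ht hσ) (two_poles_int r τ x σ hτ hσ),
    two_poles s t x σ ht hσ h2, two_poles r τ x σ hτ hσ h3]
  simp

open FourierTransform in
/-- half-line Fourier integral -/
noncomputable def FI (φ : SchwartzMap ℝ ℂ) (t y : ℝ) : ℂ :=
  ∫ ξ in Set.Ioi (0:ℝ), Complex.exp (2 * Real.pi * Complex.I * (y + t * Complex.I) * ξ) * (𝓕 φ) ξ

/-- Cauchy integral -/
noncomputable def CI (φ : SchwartzMap ℝ ℂ) (t y : ℝ) : ℂ :=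
  ∫ s : ℝ, φ s * ((y : ℂ) - s + t * Complex.I)⁻¹

lemma exp_norm (t y ξ : ℝ) (ht : 0 ≤ t) (hξ : 0 < ξ) :
    ‖Complex.exp (2 * Real.pi * Complex.I * (y + t * Complex.I) * ξ)‖ ≤ 1 := by
  rw [Complex.norm_exp]
  apply Real.exp_le_one_iff.2
  have : (2 * Real.pi * Complex.I * (y + t * Complex.I) * ξ : ℂ).re = - (2 * Real.pi * t * ξ) := by
    simp
  rw [this]
  have := Real.pi_pos
  have : 0 ≤ 2 * Real.pi * t * ξ := by positivity
  linarith

open FourierTransform in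
lemma CI_eq (φ : SchwartzMap ℝ ℂ) (t y : ℝ) (ht : 0 < t) :
    CI φ t y = -(2 * Real.pi * Complex.I) * FI φ t y := by
  have hpi := Real.pi_pos
  have hF : ∀ ξ : ℝ, (𝓕 φ) ξ = ∫ s : ℝ, Complex.exp (↑(-2 * Real.pi * s * ξ) * Complex.I) * φ s := by
    intro ξ
    rw [SchwartzMap.fourier_coe, Real.fourier_real_eq_integral_exp_smul]
    rfl
  have hre : (2 * Real.pi * Complex.I * (y + t * Complex.I) : ℂ).re < 0 := by
    simp; positivity
  have hint : Integrable (Function.uncurry fun (ξ s : ℝ) =>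
      Complex.exp (2 * Real.pi * Complex.I * (y + t * Complex.I) * ξ) *
        (Complex.exp (↑(-2 * Real.pi * s * ξ) * Complex.I) * φ s))
      ((volume.restrict (Set.Ioi (0:ℝ))).prod volume) := by
    have h1 : Integrable (fun z : ℝ × ℝ =>
      Complex.exp (2 * Real.pi * Complex.I * (y + t * Complex.I) * z.1) * φ z.2)
      ((volume.restrict (Set.Ioi (0:ℝ))).prod volume) :=
      Integrable.mul_prod (integrableOn_exp_mul_complex_Ioi hre 0) φ.integrable
    have hc := φ.continuous
    refine h1.mono (Continuous.aestronglyMeasurable ?_) ?_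
    · unfold Function.uncurry; fun_prop
    · filter_upwards with z
      simp only [Function.uncurry, norm_mul, Complex.norm_exp_ofReal_mul_I, one_mul]
      rfl
  have h2 : FI φ t y = ∫ ξ in Set.Ioi (0:ℝ), ∫ s : ℝ,
      Complex.exp (2 * Real.pi * Complex.I * (y + t * Complex.I) * ξ) *
        (Complex.exp (↑(-2 * Real.pi * s * ξ) * Complex.I) * φ s) := by
    unfold FI
    congr 1; ext ξ
    rw [hF, integral_const_mul]
  rw [h2, integral_integral_swap hint, CI, ← integral_const_mul]
  congr 1; ext s
  have hre' : (2 * Real.pi * Complex.I * (y - s + t * Complex.I) : ℂ).re < 0 := by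
    simp; positivity
  have h3 : ∀ ξ : ℝ, Complex.exp (2 * Real.pi * Complex.I * (y + t * Complex.I) * ξ) *
        (Complex.exp (↑(-2 * Real.pi * s * ξ) * Complex.I) * φ s) =
        Complex.exp (2 * Real.pi * Complex.I * (y - s + t * Complex.I) * ξ) * φ s := by
    intro ξ
    rw [← mul_assoc, ← Complex.exp_add]
    congr 2
    push_cast; ring
  simp_rw [h3]
  rw [integral_mul_const, integral_exp_mul_complex_Ioi hre']
  have := ker_ne y s t ht
  have hpi' : (Real.pi : ℂ) ≠ 0 := by exact_mod_cast hpi.ne'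
  generalize (y : ℂ) - s + t * Complex.I = D at *
  simp
  field_simp

open FourierTransform in
lemma FI_bound (φ : SchwartzMap ℝ ℂ) (t y : ℝ) (ht : 0 ≤ t) :
    ‖FI φ t y‖ ≤ ∫ ξ in Set.Ioi (0:ℝ), ‖(𝓕 φ) ξ‖ := by
  refine norm_integral_le_of_norm_le (𝓕 φ).integrable.norm.integrableOn ?_
  refine (ae_restrict_iff' measurableSet_Ioi).2 ?_
  filter_upwards with ξ hξ
  rw [norm_mul]
  exact mul_le_of_le_one_left (norm_nonneg _) (exp_norm t y ξ ht hξ)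

open FourierTransform in
lemma FI_cont (φ : SchwartzMap ℝ ℂ) (t : ℝ) (ht : 0 ≤ t) : Continuous (FI φ t) := by
  have hc := (𝓕 φ).continuous
  refine continuous_of_dominated (bound := fun ξ => ‖(𝓕 φ) ξ‖) ?_ ?_ 
    (𝓕 φ).integrable.norm.integrableOn ?_
  · intro y
    exact Continuous.aestronglyMeasurable (by fun_prop)
  · intro y
    refine (ae_restrict_iff' measurableSet_Ioi).2 ?_
    filter_upwards with ξ hξ
    rw [norm_mul]
    exact mul_le_of_le_one_left (norm_nonneg _) (exp_norm t y ξ ht hξ)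
  · filter_upwards with ξ
    fun_prop

open FourierTransform in
lemma FI_lim (φ : SchwartzMap ℝ ℂ) (y : ℝ) :
    Tendsto (fun t => FI φ t y) (nhdsWithin 0 (Set.Ioi 0)) (nhds (FI φ 0 y)) := by
  have hc := (𝓕 φ).continuous
  refine tendsto_integral_filter_of_dominated_convergence (fun ξ => ‖(𝓕 φ) ξ‖) ?_ ?_ 
    (𝓕 φ).integrable.norm.integrableOn ?_
  · filter_upwards with t
    exact Continuous.aestronglyMeasurable (by fun_prop)
  · filter_upwards [self_mem_nhdsWithin] with t ht
    refine (ae_restrict_iff' measurableSet_Ioi).2 ?_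
    filter_upwards with ξ hξ
    rw [norm_mul]
    exact mul_le_of_le_one_left (norm_nonneg _) (exp_norm t y ξ (le_of_lt ht) hξ)
  · filter_upwards with ξ
    have : Continuous fun t : ℝ =>
      Complex.exp (2 * Real.pi * Complex.I * (y + t * Complex.I) * ξ) * (𝓕 φ) ξ := by fun_prop
    exact (this.tendsto 0).mono_left nhdsWithin_le_nhds

/-- boundary value -/
noncomputable def BV (φ : SchwartzMap ℝ ℂ) (y : ℝ) : ℂ := -(2 * Real.pi * Complex.I) * FI φ 0 y

lemma BV_cont (φ : SchwartzMap ℝ ℂ) : Continuous (BV φ) :=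
  continuous_const.mul (FI_cont φ 0 le_rfl)

lemma CI_cont (φ : SchwartzMap ℝ ℂ) (t : ℝ) (ht : 0 < t) : Continuous (CI φ t) := by
  have : CI φ t = fun y => -(2 * Real.pi * Complex.I) * FI φ t y := by
    ext y; exact CI_eq φ t y ht
  rw [this]
  exact continuous_const.mul (FI_cont φ t ht.le)

lemma CI_lim (φ : SchwartzMap ℝ ℂ) (y : ℝ) :
    Tendsto (fun t => CI φ t y) (nhdsWithin 0 (Set.Ioi 0)) (nhds (BV φ y)) := by
  refine ((FI_lim φ y).const_mul (-(2 * Real.pi * Complex.I))).congr' ?_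
  filter_upwards [self_mem_nhdsWithin] with t ht
  exact (CI_eq φ t y ht).symm

open FourierTransform in
lemma CI_bdd (φ : SchwartzMap ℝ ℂ) : ∃ B, ∀ t y : ℝ, 0 < t → ‖CI φ t y‖ ≤ B := by
  refine ⟨‖-(2 * Real.pi * Complex.I)‖ * ∫ ξ in Set.Ioi (0:ℝ), ‖(𝓕 φ) ξ‖, fun t y ht => ?_⟩
  rw [CI_eq φ t y ht, norm_mul]
  exact mul_le_mul_of_nonneg_left (FI_bound φ t y ht.le) (norm_nonneg _)

lemma CI_int (φ : SchwartzMap ℝ ℂ) (t y : ℝ) (ht : 0 < t) :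
    Integrable fun s : ℝ => φ s * ((y : ℂ) - s + t * Complex.I)⁻¹ := by
  refine φ.integrable.mul_bdd (c := t⁻¹) (Continuous.aestronglyMeasurable ?_) ?_
  · exact (ker_cont' t ht).comp (by fun_prop : Continuous fun s : ℝ => (y, s))
  · filter_upwards with s
    exact ker_inv_norm y s t ht

lemma CI_decay (φ : SchwartzMap ℝ ℂ) : ∃ B, ∀ t y : ℝ, 0 < t → ‖CI φ t y‖ * (1 + |y|) ≤ B := by
  have hg : Function.HasTemperateGrowth (fun s : ℝ => (s : ℂ)) :=
    Complex.ofRealCLM.hasTemperateGrowth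
  set ψ := SchwartzMap.smulLeftCLM ℂ (fun s : ℝ => (s : ℂ)) φ with hψ
  obtain ⟨B, hB⟩ := CI_bdd φ
  obtain ⟨D, hD⟩ := CI_bdd ψ
  refine ⟨B + (‖∫ s, φ s‖ + D), fun t y ht => ?_⟩
  have e : (y + t * Complex.I) * CI φ t y = (∫ s, φ s) + CI ψ t y := by
    unfold CI
    rw [← integral_const_mul, ← integral_add φ.integrable (CI_int ψ t y ht)]
    congr 1; ext s
    rw [hψ, SchwartzMap.smulLeftCLM_apply_apply hg, smul_eq_mul]
    have := ker_ne y s t ht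
    have e2 : (y : ℂ) + t * Complex.I = (y - s + t * Complex.I) + s := by ring
    rw [e2]
    generalize (y : ℂ) - s + t * Complex.I = A at *
    field_simp
  have h1 : ‖CI φ t y‖ * |y| ≤ ‖∫ s, φ s‖ + D := by
    calc ‖CI φ t y‖ * |y| ≤ ‖CI φ t y‖ * ‖(y + t * Complex.I : ℂ)‖ := by
          gcongr
          have := Complex.abs_re_le_norm (y + t * Complex.I : ℂ)
          simpa using this
      _ = ‖(∫ s, φ s) + CI ψ t y‖ := by rw [← e, norm_mul, mul_comm]
      _ ≤ _ := (norm_add_le _ _).trans (by gcongr; exact hD t y ht)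
  have := hB t y ht
  linarith

lemma BV_decay (φ : SchwartzMap ℝ ℂ) : ∃ B, ∀ y : ℝ, ‖BV φ y‖ * (1 + |y|) ≤ B := by
  obtain ⟨B, hB⟩ := CI_decay φ
  refine ⟨B, fun y => ?_⟩
  refine le_of_tendsto ((CI_lim φ y).norm.mul_const (1 + |y|)) ?_
  filter_upwards [self_mem_nhdsWithin] with t ht
  exact hB t y ht

/-- Fubini -/
lemma CI_fubini (φ : SchwartzMap ℝ ℂ) (t : ℝ) (ht : 0 < t) (K : ℝ → ℂ) (hK : Integrable K) :
    ∫ y, K y * CI φ t y = ∫ s, φ s * ∫ y : ℝ, K y * ((y : ℂ) - s + t * Complex.I)⁻¹ := by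
  have hint : Integrable (Function.uncurry fun (y s : ℝ) =>
      (K y * φ s) * ((y : ℂ) - s + t * Complex.I)⁻¹) (volume.prod volume) := by
    refine (hK.mul_prod φ.integrable).mul_bdd (c := t⁻¹) (ker_cont' t ht).aestronglyMeasurable ?_
    filter_upwards with z
    exact ker_inv_norm _ _ t ht
  have := integral_integral_swap hint
  calc ∫ y, K y * CI φ t y = ∫ y, ∫ s, (K y * φ s) * ((y : ℂ) - s + t * Complex.I)⁻¹ := by
        congr 1; ext y
        rw [CI, ← integral_const_mul]
        congr 1; ext s; ring
    _ = _ := this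
    _ = _ := by
        congr 1; ext s
        rw [← integral_const_mul]
        congr 1; ext y; ring

lemma CI_CI_zero (φ ψ : SchwartzMap ℝ ℂ) (t τ x σ : ℝ) (ht : 0 < t) (hτ : 0 < τ) (hσ : 0 < σ)
    (h1 : t ≠ τ) (h2 : t ≠ σ) (h3 : τ ≠ σ) :
    ∫ y : ℝ, (((y : ℂ) - x + σ * Complex.I)⁻¹ * CI φ t y) * CI ψ τ y = 0 := by
  obtain ⟨C, hC⟩ := ker_decay x σ hσ
  obtain ⟨B, hB⟩ := CI_decay φ
  have hK : Integrable fun y : ℝ => ((y : ℂ) - x + σ * Complex.I)⁻¹ * CI φ t y := by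
    refine integrable_of_decay _ ((ker_cont x σ hσ).mul (CI_cont φ t ht)) (C * B) fun y => ?_
    rw [norm_mul, mul_mul_mul_comm]
    have : 0 ≤ ‖((y : ℂ) - x + σ * Complex.I)⁻¹‖ * (1 + |y|) := by positivity
    exact mul_le_mul (hC y) (hB t y ht) (by positivity) (this.trans (hC y))
  rw [CI_fubini ψ τ hτ _ hK]
  have : ∀ r : ℝ, ∫ y : ℝ, (((y : ℂ) - x + σ * Complex.I)⁻¹ * CI φ t y) *
      ((y : ℂ) - r + τ * Complex.I)⁻¹ = 0 := by
    intro r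
    have := CI_fubini φ t ht _ (two_poles_int x σ r τ hσ hτ)
    rw [show ∫ y : ℝ, (((y : ℂ) - x + σ * Complex.I)⁻¹ * CI φ t y) *
      ((y : ℂ) - r + τ * Complex.I)⁻¹ = ∫ y : ℝ, (((y : ℂ) - x + σ * Complex.I)⁻¹ *
      ((y : ℂ) - r + τ * Complex.I)⁻¹) * CI φ t y by congr 1; ext y; ring, this]
    simp_rw [three_poles r τ _ t x σ hτ ht hσ h1.symm h3 h2]
    simp
  simp_rw [this]
  simp

lemma BV_BV_zero (φ ψ : SchwartzMap ℝ ℂ) (x σ : ℝ) (hσ : 0 < σ) :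
    ∫ y : ℝ, (((y : ℂ) - x + σ * Complex.I)⁻¹ * BV φ y) * BV ψ y = 0 := by
  obtain ⟨B, hB⟩ := CI_decay φ
  obtain ⟨D, hD⟩ := CI_decay ψ
  have h2 : Tendsto (fun t : ℝ => 2 * t) (nhdsWithin 0 (Set.Ioi 0)) (nhdsWithin 0 (Set.Ioi 0)) := by
    refine tendsto_nhdsWithin_iff.2 ⟨?_, ?_⟩
    · have : Continuous fun t : ℝ => 2 * t := by fun_prop
      simpa using (this.tendsto 0).mono_left (nhdsWithin_le_nhds (s := Set.Ioi (0:ℝ)))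
    · filter_upwards [self_mem_nhdsWithin] with t ht
      have ht : 0 < t := ht
      exact (by positivity : 0 < 2 * t)
  have hl : Tendsto (fun t : ℝ => ∫ y : ℝ, (((y : ℂ) - x + σ * Complex.I)⁻¹ * CI φ t y) *
      CI ψ (2 * t) y) (nhdsWithin 0 (Set.Ioi 0))
      (nhds (∫ y : ℝ, (((y : ℂ) - x + σ * Complex.I)⁻¹ * BV φ y) * BV ψ y)) := by
    refine tendsto_integral_filter_of_dominated_convergence
      (fun y => (σ⁻¹ * B * D) * (1 + y ^ 2)⁻¹) ?_ ?_ (integrable_inv_one_add_sq.const_mul _) ?_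
    · filter_upwards [self_mem_nhdsWithin] with t ht
      have ht : 0 < t := ht
      exact (((ker_cont x σ hσ).mul (CI_cont φ t ht)).mul
        (CI_cont ψ (2 * t) (by positivity))).aestronglyMeasurable
    · filter_upwards [self_mem_nhdsWithin] with t ht
      have ht : 0 < t := ht
      filter_upwards with y
      rw [← div_eq_mul_inv, le_div_iff₀ (by positivity), norm_mul, norm_mul]
      have k1 := ker_inv_norm y x σ hσ
      have k2 := hB t y ht
      have k3 := hD (2 * t) y (by positivity)
      have k4 : 0 ≤ ‖CI φ t y‖ * (1 + |y|) := by positivity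
      have k6 : 0 ≤ B := k4.trans k2
      calc _ ≤ ‖((y : ℂ) - x + σ * Complex.I)⁻¹‖ * ‖CI φ t y‖ * ‖CI ψ (2 * t) y‖ *
            ((1 + |y|) * (1 + |y|)) := by
            gcongr
            nlinarith [abs_nonneg y, sq_abs y]
        _ = ‖((y : ℂ) - x + σ * Complex.I)⁻¹‖ * (‖CI φ t y‖ * (1 + |y|)) *
            (‖CI ψ (2 * t) y‖ * (1 + |y|)) := by ring
        _ ≤ _ := by gcongr
    · filter_upwards with y
      exact ((CI_lim φ y).const_mul _).mul ((CI_lim ψ y).comp h2)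
  refine tendsto_nhds_unique hl (tendsto_const_nhds.congr' ?_)
  have : Set.Ioo (0:ℝ) (σ / 2) ∈ nhdsWithin (0:ℝ) (Set.Ioi 0) := Ioo_mem_nhdsGT (by positivity)
  filter_upwards [this] with t ht
  have ht0 : 0 < t := ht.1
  have ht1 := ht.2
  exact (CI_CI_zero φ ψ t (2 * t) x σ ht0 (by positivity) hσ (by linarith) (by linarith)
    (by linarith)).symm

lemma ker_split (x y t : ℝ) : ((x : ℂ) - y + t * Complex.I)⁻¹ =
    (((x - y) / ((x - y) ^ 2 + t ^ 2) : ℝ) : ℂ) - ((t / ((x - y) ^ 2 + t ^ 2) : ℝ) : ℂ) * Complex.I := by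
  have hn : Complex.normSq ((x : ℂ) - y + t * Complex.I) = (x - y) ^ 2 + t ^ 2 := by
    rw [Complex.normSq_apply, ker_re, ker_im]; ring
  apply Complex.ext
  · rw [Complex.inv_re, hn, ker_re]; simp [-Complex.ofReal_div]
  · rw [Complex.inv_im, hn, ker_im]; simp [-Complex.ofReal_div, neg_div]

lemma int_pois (u : ℝ → ℝ) (hi : Integrable u) (x t : ℝ) (ht : 0 < t) :
    Integrable (fun y => u y * (t / ((x - y) ^ 2 + t ^ 2))) := by
  refine hi.mul_bdd (c := t⁻¹) (Measurable.aestronglyMeasurable (by fun_prop)) ?_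
  filter_upwards with y
  rw [Real.norm_eq_abs, abs_of_pos (by positivity), div_le_iff₀ (by positivity)]
  have : t⁻¹ * ((x - y) ^ 2 + t ^ 2) = t + t⁻¹ * (x - y) ^ 2 := by field_simp; ring
  have : 0 ≤ t⁻¹ * (x - y) ^ 2 := by positivity
  linarith

lemma prod_int (a b : ℝ → ℝ) (ha : Continuous a) (hb : Continuous b) (A B : ℝ)
    (hA : ∀ y, |a y| * (1 + |y|) ≤ A) (hB : ∀ y, |b y| * (1 + |y|) ≤ B) :
    Integrable (fun y => a y * b y) ∧ ∀ y, |a y * b y| ≤ A * B := by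
  have h : ∀ y, ‖a y * b y‖ * ((1 + |y|) * (1 + |y|)) ≤ A * B := by
    intro y
    rw [norm_mul, mul_mul_mul_comm]
    have : 0 ≤ |a y| * (1 + |y|) := by positivity
    exact mul_le_mul (hA y) (hB y) (by positivity) (this.trans (hA y))
  refine ⟨integrable_of_decay _ (ha.mul hb) _ h, fun y => le_trans ?_ (h y)⟩
  refine le_mul_of_one_le_right (abs_nonneg _) ?_
  nlinarith [abs_nonneg y]

lemma BV_eq (f : SchwartzMap ℝ ℝ) (hf : ℝ → ℝ) (Hf : IsPVHilbert (⇑f) hf) (φ : SchwartzMap ℝ ℂ)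
    (hφ : ∀ s, φ s = (f s : ℂ)) (x : ℝ) :
    BV φ x = Real.pi * hf x - Real.pi * f x * Complex.I := by
  obtain ⟨M, hM⟩ : ∃ M, ∀ y, |f y| ≤ M := by
    obtain ⟨M, -, hM⟩ := f.decay 0 0
    exact ⟨M, fun y => by simpa using hM y⟩
  have h1 := conj_lim f f.continuous f.integrable M hM x (hf x) (Hf x)
  have h2 := poisson_lim f f.continuous M hM x
  have h3 := ((Complex.continuous_ofReal.tendsto _).comp h1).sub
    (((Complex.continuous_ofReal.tendsto _).comp h2).mul_const Complex.I)
  push_cast at h3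
  refine tendsto_nhds_unique (CI_lim φ x) (h3.congr' ?_)
  filter_upwards [self_mem_nhdsWithin] with t ht
  have ht : 0 < t := ht
  simp only [Function.comp, CI]
  rw [← integral_complex_ofReal, ← integral_complex_ofReal, ← integral_mul_const, ← integral_sub]
  · congr 1; ext y
    rw [ker_split, hφ]
    push_cast; ring
  · exact (int_conj f f.integrable x t ht).ofReal
  · exact (int_pois f f.integrable x t ht).ofReal.mul_const _

/-- The Tricomi identity: `H(fg) = H(f)g + fH(g) + H(Hf·Hg)`. -/
theorem tricomi_identity (f g : SchwartzMap ℝ ℝ) (hf hg hfg hh : ℝ → ℝ)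
    (Hf : IsPVHilbert (⇑f) hf) (Hg : IsPVHilbert (⇑g) hg)
    (Hfg : IsPVHilbert (fun x : ℝ => f x * g x) hfg)
    (Hh : IsPVHilbert (fun x : ℝ => hf x * hg x) hh) :
    ∀ x : ℝ, hfg x = hf x * g x + f x * hg x + hh x := by
  intro x
  have hpi := Real.pi_pos
  set φ : SchwartzMap ℝ ℂ := SchwartzMap.postcompCLM (𝕜 := ℝ) Complex.ofRealCLM f with hφ
  set ψ : SchwartzMap ℝ ℂ := SchwartzMap.postcompCLM (𝕜 := ℝ) Complex.ofRealCLM g with hψ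
  have e1 := BV_eq f hf Hf φ (fun s => rfl)
  have e2 := BV_eq g hg Hg ψ (fun s => rfl)
  have key : ∀ (u h : ℝ → ℝ) (χ : SchwartzMap ℝ ℂ),
      (∀ x, BV χ x = Real.pi * h x - Real.pi * u x * Complex.I) →
      Continuous h ∧ ∃ B, (∀ y, |h y| * (1 + |y|) ≤ B) ∧ (∀ y, |u y| * (1 + |y|) ≤ B) := by
    intro u h χ e
    have er : ∀ y, h y = Real.pi⁻¹ * (BV χ y).re := by
      intro y; rw [e]; simp
    have ei : ∀ y, u y = -(Real.pi⁻¹ * (BV χ y).im) := by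
      intro y; rw [e]; simp
    constructor
    · rw [funext er]
      exact continuous_const.mul (Complex.continuous_re.comp (BV_cont χ))
    · obtain ⟨B, hB⟩ := BV_decay χ
      refine ⟨Real.pi⁻¹ * B, fun y => ?_, fun y => ?_⟩
      · rw [er, abs_mul, abs_of_pos (inv_pos.2 hpi), mul_assoc]
        gcongr
        refine le_trans ?_ (hB y)
        gcongr
        exact Complex.abs_re_le_norm _
      · rw [ei, abs_neg, abs_mul, abs_of_pos (inv_pos.2 hpi), mul_assoc]
        gcongr
        refine le_trans ?_ (hB y)
        gcongr
        exact Complex.abs_im_le_norm _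
  obtain ⟨chf, A, hA1, hA2⟩ := key f hf φ e1
  obtain ⟨chg, B, hB1, hB2⟩ := key g hg ψ e2
  have cf := f.continuous
  have cg := g.continuous
  obtain ⟨i1, b1⟩ := prod_int hf hg chf chg A B hA1 hB1
  obtain ⟨i2, b2⟩ := prod_int f g cf cg A B hA2 hB2
  obtain ⟨i3, b3⟩ := prod_int hf g chf cg A B hA1 hB2
  obtain ⟨i4, b4⟩ := prod_int f hg cf chg A B hA2 hB1
  have l1 := conj_lim _ (chf.mul chg) i1 _ b1 x _ (Hh x)
  have l2 := conj_lim _ (cf.mul cg) i2 _ b2 x _ (Hfg x)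
  have l3 := poisson_lim _ (chf.mul cg) _ b3 x
  have l4 := poisson_lim _ (cf.mul chg) _ b4 x
  simp only [Pi.mul_apply] at l1 l2 l3 l4
  have l := (l1.sub l2).add (l3.add l4)
  have hz : Real.pi * hh x - Real.pi * hfg x +
      (Real.pi * (hf x * g x) + Real.pi * (f x * hg x)) = 0 := by
    refine tendsto_nhds_unique l (tendsto_const_nhds.congr' ?_)
    filter_upwards [self_mem_nhdsWithin] with t ht
    have ht : 0 < t := ht
    have j1 := int_conj _ i1 x t ht
    have j2 := int_conj _ i2 x t ht
    have j3 := int_pois _ i3 x t ht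
    have j4 := int_pois _ i4 x t ht
    rw [← integral_sub j1 j2, ← integral_add j3 j4, ← integral_add (by exact j1.sub j2) (by exact j3.add j4)]
    have hb := BV_BV_zero φ ψ x t ht
    have hI : Integrable (fun y : ℝ => (((y : ℂ) - x + t * Complex.I)⁻¹ * BV φ y) * BV ψ y) := by
      obtain ⟨P, hP⟩ := BV_decay φ
      obtain ⟨Q, hQ⟩ := BV_decay ψ
      have : Integrable (fun y : ℝ => BV φ y * BV ψ y) := by
        refine integrable_of_decay _ ((BV_cont φ).mul (BV_cont ψ)) (P * Q) fun y => ?_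
        rw [norm_mul, mul_mul_mul_comm]
        have : 0 ≤ ‖BV φ y‖ * (1 + |y|) := by positivity
        exact mul_le_mul (hP y) (hQ y) (by positivity) (this.trans (hP y))
      have := this.bdd_mul (c := t⁻¹) (ker_cont x t ht).aestronglyMeasurable
        (by filter_upwards with y; exact ker_inv_norm y x t ht)
      simpa only [mul_assoc] using this
    have hr := integral_re hI
    rw [hb] at hr
    have hr2 : ∫ y : ℝ, -(Real.pi ^ 2) * ((hf y * hg y * ((x - y) / ((x - y) ^ 2 + t ^ 2)) -
        f y * g y * ((x - y) / ((x - y) ^ 2 + t ^ 2))) +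
        (hf y * g y * (t / ((x - y) ^ 2 + t ^ 2)) + f y * hg y * (t / ((x - y) ^ 2 + t ^ 2)))) = 0 := by
      refine Eq.trans ?_ (hr.trans (by simp))
      congr 1; ext y
      rw [e1, e2, ker_split, show (y - x) ^ 2 = (x - y) ^ 2 by ring,
        show (y - x) / ((x - y) ^ 2 + t ^ 2) = -((x - y) / ((x - y) ^ 2 + t ^ 2)) by ring]
      generalize (x - y) / ((x - y) ^ 2 + t ^ 2) = a
      generalize t / ((x - y) ^ 2 + t ^ 2) = b
      simp
      ring
    rw [integral_const_mul] at hr2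
    have := (mul_eq_zero.1 hr2).resolve_left (by simp [hpi.ne'])
    exact this.symm
  have : Real.pi * (hh x - hfg x + (hf x * g x + f x * hg x)) = 0 := by linarith
  have := (mul_eq_zero.1 this).resolve_left hpi.ne'
  linarith
end
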